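/- arXiv:1304.1887 — 2 statements merged into one kernel-verified Lean document; each statement's English description precedes it below -/
import Mathlib

section
/- Under Assumptions (G) and (MR), for any ε ∈ (0,1) and T ∈ ℕ⁺ there exists N_0 ∈ ℕ⁺ such that for all N ≥ N_0, all x_{0:T}, x̌_{0:T} ∈ 𝒳^{T+1}, and all measurable φ : 𝒳^{T+1} → [−1,1], one has |P_T^N(φ)(x_{0:T}) − P_T^N(φ)(x̌_{0:T})| ≤ ε. -/
open MeasureTheory ProbabilityTheory Filter
open scoped ENNReal Topology

namespace ParticleGibbs

variable {𝒳 : Type*} [MeasurableSpace 𝒳]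

/-- Normalised resampling weights `W_t^n`. -/
noncomputable def weight {N : ℕ} (G : 𝒳 → ℝ) (x : Fin N → 𝒳) (n : Fin N) : ℝ :=
  G (x n) / ∑ j, G (x j)

/-- Unnormalised Feynman–Kac path measure `γ_t` on `𝒳^{t+1}`. -/
noncomputable def fk (m0 : Measure 𝒳) (m : ℕ → Kernel 𝒳 𝒳) (G : ℕ → 𝒳 → ℝ) :
    (t : ℕ) → Measure (Fin (t + 1) → 𝒳)
  | 0 => m0.map fun x => fun _ => x
  | t + 1 =>
      (fk m0 m G t).bind fun z =>
        ENNReal.ofReal (G t (z (Fin.last t))) •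
          ((m (t + 1)) (z (Fin.last t))).map fun x => Fin.snoc z x

/-- The Feynman–Kac normalising constant `Z_T`. -/
noncomputable def fkZ (m0 : Measure 𝒳) (m : ℕ → Kernel 𝒳 𝒳) (G : ℕ → 𝒳 → ℝ) (T : ℕ) : ℝ≥0∞ :=
  fk m0 m G T Set.univ

/-- The normalised Feynman–Kac path measure `Q_T`. -/
noncomputable def fkQ (m0 : Measure 𝒳) (m : ℕ → Kernel 𝒳 𝒳) (G : ℕ → 𝒳 → ℝ) (T : ℕ) :
    Measure (Fin (T + 1) → 𝒳) :=
  (fkZ m0 m G T)⁻¹ • fk m0 m G T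

/-- Multinomial selection distribution on labels, with probabilities `W^n`. -/
noncomputable def select {N : ℕ} (G : 𝒳 → ℝ) (x : Fin N → 𝒳) : Measure (Fin N) :=
  ∑ n : Fin N, ENNReal.ofReal (weight G x n) • Measure.dirac n

/-- Multinomial resampling distribution: the ancestors are i.i.d. draws from `select`. -/
noncomputable def multinomialR {N : ℕ} (G : 𝒳 → ℝ) (x : Fin N → 𝒳) :
    Measure (Fin N → Fin N) :=
  Measure.pi fun _ : Fin N => select G x

/-- The law `θ_T^N` of the interacting particle system (states and ancestor variables). -/
noncomputable def particleLaw (N : ℕ) (m0 : Measure 𝒳) (m : ℕ → Kernel 𝒳 𝒳)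
    (R : ℕ → (Fin N → 𝒳) → Measure (Fin N → Fin N)) :
    (t : ℕ) → Measure ((Fin (t + 1) → Fin N → 𝒳) × (Fin t → Fin N → Fin N))
  | 0 => (Measure.pi fun _ : Fin N => m0).map fun x0 => (fun _ => x0, fun i => i.elim0)
  | t + 1 =>
      (particleLaw N m0 m R t).bind fun p =>
        (R t (p.1 (Fin.last t))).bind fun a =>
          (Measure.pi fun n : Fin N => (m (t + 1)) (p.1 (Fin.last t) (a n))).map fun xnew =>
            (Fin.snoc p.1 xnew, Fin.snoc p.2 a)

/-- Auxiliary backward recursion for ancestral lineages: `ancAux T a n k = B_{T-k}`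
where `B_T = n` and `B_t = a_t (B_{t+1})`. -/
def ancAux {N : ℕ} (T : ℕ) (a : Fin T → Fin N → Fin N) (n : Fin N) : ℕ → Fin N
  | 0 => n
  | k + 1 => if h : T - (k + 1) < T then a ⟨T - (k + 1), h⟩ (ancAux T a n k) else n

/-- The ancestral lineage `B` of the particle with final label `n`. -/
def lineage {N T : ℕ} (a : Fin T → Fin N → Fin N) (n : Fin N) : Fin (T + 1) → Fin N :=
  fun t => ancAux T a n (T - (t : ℕ))

/-- The trajectory `Z_T^n` of the particle with final label `n`. -/
def traj {N T : ℕ} (x : Fin (T + 1) → Fin N → 𝒳) (a : Fin T → Fin N → Fin N) (n : Fin N) :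
    Fin (T + 1) → 𝒳 :=
  fun t => x t (lineage a n t)

/-- The extended target distribution `π_T^N` on particles, ancestors and the selected index. -/
noncomputable def piTN (N : ℕ) (m0 : Measure 𝒳) (m : ℕ → Kernel 𝒳 𝒳) (G : ℕ → 𝒳 → ℝ)
    (R : ℕ → (Fin N → 𝒳) → Measure (Fin N → Fin N)) (T : ℕ) :
    Measure (((Fin (T + 1) → Fin N → 𝒳) × (Fin T → Fin N → Fin N)) × Fin N) :=
  (fkZ m0 m G T)⁻¹ •
    ((particleLaw N m0 m R T).withDensity fun p =>
        ENNReal.ofReal (∏ t : Fin T, (N : ℝ)⁻¹ * ∑ n, G t (p.1 t.castSucc n))).bind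
      fun p =>
        (∑ n : Fin N, ENNReal.ofReal ((N : ℝ)⁻¹ * G T (p.1 (Fin.last T) n)) •
            Measure.dirac n).map fun n => (p, n)

/-- The conditional distribution of the whole ancestor vector given `A^n = m`. -/
noncomputable def condAncestor {N : ℕ} (R : Measure (Fin N → Fin N)) (n m : Fin N) :
    Measure (Fin N → Fin N) :=
  (R {a | a n = m})⁻¹ • R.restrict {a | a n = m}

/-- CPF step 1: the law of the conditional particle system, where at each time `t` the
particle labelled `i t` is frozen at `z t` and the ancestor constraint `A_t^{i(t+1)} = i t`
holds. -/
noncomputable def cpfSystem (N : ℕ) (m0 : Measure 𝒳) (m : ℕ → Kernel 𝒳 𝒳)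
    (R : ℕ → (Fin N → 𝒳) → Measure (Fin N → Fin N)) (z : ℕ → 𝒳) (i : ℕ → Fin N) :
    (t : ℕ) → Measure ((Fin (t + 1) → Fin N → 𝒳) × (Fin t → Fin N → Fin N))
  | 0 => (Measure.pi fun n : Fin N => if n = i 0 then Measure.dirac (z 0) else m0).map
      fun x0 => (fun _ => x0, fun j => j.elim0)
  | t + 1 =>
      (cpfSystem N m0 m R z i t).bind fun p =>
        (condAncestor (R t (p.1 (Fin.last t))) (i (t + 1)) (i t)).bind fun a =>
          (Measure.pi fun n : Fin N =>
              if n = i (t + 1) then Measure.dirac (z (t + 1))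
              else (m (t + 1)) (p.1 (Fin.last t) (a n))).map fun xnew =>
            (Fin.snoc p.1 xnew, Fin.snoc p.2 a)

def extendPath {T : ℕ} (z : Fin (T + 1) → 𝒳) : ℕ → 𝒳 :=
  fun t => z ⟨min t T, Nat.lt_succ_of_le (Nat.min_le_right t T)⟩

def extendIdx {N T : ℕ} (i : Fin (T + 1) → Fin N) : ℕ → Fin N :=
  fun t => i ⟨min t T, Nat.lt_succ_of_le (Nat.min_le_right t T)⟩

/-- The CPF kernel with a general assignment `i` of the frozen ancestry. -/
noncomputable def cpfKernelAux (N : ℕ) (m0 : Measure 𝒳) (m : ℕ → Kernel 𝒳 𝒳)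
    (G : ℕ → 𝒳 → ℝ) (R : ℕ → (Fin N → 𝒳) → Measure (Fin N → Fin N)) (T : ℕ)
    (z : ℕ → 𝒳) (i : ℕ → Fin N) : Measure (Fin (T + 1) → 𝒳) :=
  (cpfSystem N m0 m R z i T).bind fun p =>
    (select (G T) (p.1 (Fin.last T))).bind fun n => Measure.dirac (traj p.1 p.2 n)

/-- The CPF (conditional particle filter / Particle Gibbs) Markov kernel `P_T^N`. -/
noncomputable def cpfKernel (N : ℕ) (m0 : Measure 𝒳) (m : ℕ → Kernel 𝒳 𝒳)
    (G : ℕ → 𝒳 → ℝ) (R : ℕ → (Fin N → 𝒳) → Measure (Fin N → Fin N)) (T : ℕ)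
    (z : Fin (T + 1) → 𝒳) : Measure (Fin (T + 1) → 𝒳) :=
  if hN : 0 < N then cpfKernelAux N m0 m G R T (extendPath z) fun _ => (⟨0, hN⟩ : Fin N)
  else 0

/-- Conditional probability that `A^b = v` given the other components `A^{-b} = a^{-b}`,
relative to a resampling distribution `R`. -/
noncomputable def condPMF {N : ℕ} (R : Measure (Fin N → Fin N)) (b : Fin N)
    (a : Fin N → Fin N) (v : Fin N) : ℝ≥0∞ :=
  R {Function.update a b v} / R {a' | ∀ j, j ≠ b → a' j = a j}

/-- Unnormalised backward-sampling weight of value `v` for `B_t`, given `B_{t+1} = b`. -/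
noncomputable def bsWeight {N T : ℕ} (R : ℕ → (Fin N → 𝒳) → Measure (Fin N → Fin N))
    (dens : ℕ → 𝒳 → 𝒳 → ℝ) (x : Fin (T + 1) → Fin N → 𝒳) (a : Fin T → Fin N → Fin N)
    (t : Fin T) (b v : Fin N) : ℝ≥0∞ :=
  condPMF (R t (x t.castSucc)) b (a t) v *
    ENNReal.ofReal (dens ((t : ℕ) + 1) (x t.castSucc v) (x t.succ b))

/-- One backward-sampling update, redrawing `B_t` given `B_{t+1}`. -/
noncomputable def bsStep {N T : ℕ} (R : ℕ → (Fin N → 𝒳) → Measure (Fin N → Fin N))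
    (dens : ℕ → 𝒳 → 𝒳 → ℝ) (x : Fin (T + 1) → Fin N → 𝒳) (a : Fin T → Fin N → Fin N)
    (t : Fin T) (B : Fin (T + 1) → Fin N) : Measure (Fin (T + 1) → Fin N) :=
  ∑ v : Fin N,
    (bsWeight R dens x a t (B t.succ) v /
        ∑ u : Fin N, bsWeight R dens x a t (B t.succ) u) •
      Measure.dirac (Function.update B t.castSucc v)

/-- The law of the backward-sampled lineage (step CPF-3), started from `B_T = nstar`. -/
noncomputable def bsLaw {N T : ℕ} (R : ℕ → (Fin N → 𝒳) → Measure (Fin N → Fin N))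
    (dens : ℕ → 𝒳 → 𝒳 → ℝ) (x : Fin (T + 1) → Fin N → 𝒳) (a : Fin T → Fin N → Fin N)
    (nstar : Fin N) : Measure (Fin (T + 1) → Fin N) :=
  ((List.finRange T).reverse).foldl (fun μ t => μ.bind (bsStep R dens x a t))
    (Measure.dirac fun _ => nstar)

/-- The CPF-BS kernel with general frozen-ancestry assignment `i`. -/
noncomputable def cpfBSKernelAux (N : ℕ) (m0 : Measure 𝒳) (m : ℕ → Kernel 𝒳 𝒳)
    (G : ℕ → 𝒳 → ℝ) (R : ℕ → (Fin N → 𝒳) → Measure (Fin N → Fin N))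
    (dens : ℕ → 𝒳 → 𝒳 → ℝ) (T : ℕ) (z : ℕ → 𝒳) (i : ℕ → Fin N) :
    Measure (Fin (T + 1) → 𝒳) :=
  (cpfSystem N m0 m R z i T).bind fun p =>
    (select (G T) (p.1 (Fin.last T))).bind fun n =>
      (bsLaw R dens p.1 p.2 n).bind fun B => Measure.dirac fun t => p.1 t (B t)

/-- The CPF-BS (conditional particle filter with backward sampling) kernel `P_T^{N,B}`. -/
noncomputable def cpfBSKernel (N : ℕ) (m0 : Measure 𝒳) (m : ℕ → Kernel 𝒳 𝒳)
    (G : ℕ → 𝒳 → ℝ) (R : ℕ → (Fin N → 𝒳) → Measure (Fin N → Fin N))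
    (dens : ℕ → 𝒳 → 𝒳 → ℝ) (T : ℕ) (z : Fin (T + 1) → 𝒳) :
    Measure (Fin (T + 1) → 𝒳) :=
  if hN : 0 < N then
    cpfBSKernelAux N m0 m G R dens T (extendPath z) fun _ => (⟨0, hN⟩ : Fin N)
  else 0

/-- Partial backward sampling: update at times in `J`, deterministic tracing elsewhere. -/
noncomputable def bsStepJ {N T : ℕ} (J : Finset (Fin T))
    (R : ℕ → (Fin N → 𝒳) → Measure (Fin N → Fin N)) (dens : ℕ → 𝒳 → 𝒳 → ℝ)
    (x : Fin (T + 1) → Fin N → 𝒳) (a : Fin T → Fin N → Fin N) (t : Fin T)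
    (B : Fin (T + 1) → Fin N) : Measure (Fin (T + 1) → Fin N) :=
  if t ∈ J then bsStep R dens x a t B
  else Measure.dirac (Function.update B t.castSucc (a t (B t.succ)))

noncomputable def bsLawJ {N T : ℕ} (J : Finset (Fin T))
    (R : ℕ → (Fin N → 𝒳) → Measure (Fin N → Fin N)) (dens : ℕ → 𝒳 → 𝒳 → ℝ)
    (x : Fin (T + 1) → Fin N → 𝒳) (a : Fin T → Fin N → Fin N) (nstar : Fin N) :
    Measure (Fin (T + 1) → Fin N) :=
  ((List.finRange T).reverse).foldl (fun μ t => μ.bind (bsStepJ J R dens x a t))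
    (Measure.dirac fun _ => nstar)

/-- The CPF kernel regarded as a Markov kernel on the extended space of
trajectories together with their ancestral lineage `(z_T^⋆, b_{0:T-1}^⋆, n^⋆)`. -/
noncomputable def extCPF (N : ℕ) (m0 : Measure 𝒳) (m : ℕ → Kernel 𝒳 𝒳)
    (G : ℕ → 𝒳 → ℝ) (R : ℕ → (Fin N → 𝒳) → Measure (Fin N → Fin N)) (T : ℕ)
    (s : (Fin (T + 1) → 𝒳) × (Fin (T + 1) → Fin N)) :
    Measure ((Fin (T + 1) → 𝒳) × (Fin (T + 1) → Fin N)) :=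
  (cpfSystem N m0 m R (extendPath s.1) (extendIdx s.2) T).bind fun p =>
    (select (G T) (p.1 (Fin.last T))).bind fun n =>
      Measure.dirac (traj p.1 p.2 n, lineage p.2 n)

/-- The CPF-BS(J) kernel (partial backward sampling) on the extended space. -/
noncomputable def extBSJ (N : ℕ) (m0 : Measure 𝒳) (m : ℕ → Kernel 𝒳 𝒳)
    (G : ℕ → 𝒳 → ℝ) (R : ℕ → (Fin N → 𝒳) → Measure (Fin N → Fin N))
    (dens : ℕ → 𝒳 → 𝒳 → ℝ) (T : ℕ) (J : Finset (Fin T))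
    (s : (Fin (T + 1) → 𝒳) × (Fin (T + 1) → Fin N)) :
    Measure ((Fin (T + 1) → 𝒳) × (Fin (T + 1) → Fin N)) :=
  (cpfSystem N m0 m R (extendPath s.1) (extendIdx s.2) T).bind fun p =>
    (select (G T) (p.1 (Fin.last T))).bind fun n =>
      (bsLawJ J R dens p.1 p.2 n).bind fun B =>
        Measure.dirac ((fun t => p.1 t (B t)), B)

/-- The CPF-BS kernel on the extended space. -/
noncomputable def extBS (N : ℕ) (m0 : Measure 𝒳) (m : ℕ → Kernel 𝒳 𝒳)
    (G : ℕ → 𝒳 → ℝ) (R : ℕ → (Fin N → 𝒳) → Measure (Fin N → Fin N))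
    (dens : ℕ → 𝒳 → 𝒳 → ℝ) (T : ℕ)
    (s : (Fin (T + 1) → 𝒳) × (Fin (T + 1) → Fin N)) :
    Measure ((Fin (T + 1) → 𝒳) × (Fin (T + 1) → Fin N)) :=
  extBSJ N m0 m G R dens T Finset.univ s

/-- Uniform distribution on a finite type. -/
noncomputable def uniformFin (α : Type*) [Fintype α] [MeasurableSpace α] : Measure α :=
  (Fintype.card α : ℝ≥0∞)⁻¹ • Measure.count

/-- The stationary law of `(Z_T^⋆, B_{0:T-1}^⋆, N^⋆)`, namely `Q_T ⊗ Uniform`. -/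
noncomputable def extTarget (N : ℕ) (m0 : Measure 𝒳) (m : ℕ → Kernel 𝒳 𝒳)
    (G : ℕ → 𝒳 → ℝ) (T : ℕ) :
    Measure ((Fin (T + 1) → 𝒳) × (Fin (T + 1) → Fin N)) :=
  (fkQ m0 m G T).prod (uniformFin (Fin (T + 1) → Fin N))

/-- `k`-fold iterate of a (measure-valued) Markov kernel. -/
noncomputable def iterateKernel {α : Type*} [MeasurableSpace α] (P : α → Measure α) :
    ℕ → α → Measure α
  | 0, x => Measure.dirac x
  | k + 1, x => (P x).bind (iterateKernel P k)

/-- The law of `(ξ_0, …, ξ_n)` for a Markov chain with initial law `μ` and kernel `P`. -/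
noncomputable def chainLaw {α : Type*} [MeasurableSpace α] (μ : Measure α)
    (P : α → Measure α) : (n : ℕ) → Measure (Fin (n + 1) → α)
  | 0 => μ.map fun z => fun _ => z
  | n + 1 => (chainLaw μ P n).bind fun ξ => (P (ξ (Fin.last n))).map fun z => Fin.snoc ξ z

/-- Forced-move selection probabilities (metropolised Gibbs step on `N^⋆`). -/
noncomputable def fmProb {N : ℕ} (w : Fin N → ℝ) (i0 n : Fin N) : ℝ :=
  if n = i0 then
    1 - ∑ j ∈ Finset.univ.erase i0, w j / (1 - w i0) * min ((1 - w i0) / (1 - w j)) 1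
  else w n / (1 - w i0) * min ((1 - w i0) / (1 - w n)) 1

noncomputable def fmSelect {N : ℕ} (G : 𝒳 → ℝ) (x : Fin N → 𝒳) (i0 : Fin N) :
    Measure (Fin N) :=
  ∑ n : Fin N, ENNReal.ofReal (fmProb (weight G x) i0 n) • Measure.dirac n

/-- The forced-move CPF kernel. -/
noncomputable def fmKernel (N : ℕ) (m0 : Measure 𝒳) (m : ℕ → Kernel 𝒳 𝒳)
    (G : ℕ → 𝒳 → ℝ) (R : ℕ → (Fin N → 𝒳) → Measure (Fin N → Fin N)) (T : ℕ)
    (z : Fin (T + 1) → 𝒳) : Measure (Fin (T + 1) → 𝒳) :=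
  if hN : 0 < N then
    (cpfSystem N m0 m R (extendPath z) (fun _ => (⟨0, hN⟩ : Fin N)) T).bind fun p =>
      (fmSelect (G T) (p.1 (Fin.last T)) ⟨0, hN⟩).bind fun n =>
        Measure.dirac (traj p.1 p.2 n)
  else 0

end ParticleGibbs

namespace ParticleGibbs

variable {𝒳 : Type*} [MeasurableSpace 𝒳]

/-- One step of the coupling of two conditional particle systems.  The state of each
particle is `(Z, Ž, coupled-flag)`; `xf`, `xcf` are the frozen values at the new time. -/
noncomputable def coupleStep (N : ℕ) (m : Kernel 𝒳 𝒳) (G : 𝒳 → ℝ) (xf xcf : 𝒳)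
    (s : Fin N → 𝒳 × 𝒳 × Bool) : Measure (Fin N → 𝒳 × 𝒳 × Bool) :=
  let xiC : ℝ := ∑ j, if (s j).2.2 then G (s j).1 else 0
  let xiCc : ℝ := ∑ j, if (s j).2.2 then 0 else G (s j).1
  let xiCcChk : ℝ := ∑ j, if (s j).2.2 then 0 else G (s j).2.1
  let lam : ℝ := xiC / (xiC + xiCc)
  let lamChk : ℝ := xiC / (xiC + xiCcChk)
  let mu : Measure 𝒳 :=
    ∑ j, (if (s j).2.2 then ENNReal.ofReal (G (s j).1 / xiC) else 0) • m (s j).1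
  let muC : Measure 𝒳 :=
    ∑ j, (if (s j).2.2 then 0 else ENNReal.ofReal (G (s j).1 / xiCc)) • m (s j).1
  let muCChk : Measure 𝒳 :=
    ∑ j, (if (s j).2.2 then 0 else ENNReal.ofReal (G (s j).2.1 / xiCcChk)) • m (s j).2.1
  let nu : Measure 𝒳 :=
    ENNReal.ofReal (|lam - lamChk| / (1 - min lam lamChk)) • mu +
      ENNReal.ofReal ((1 - max lam lamChk) / (1 - min lam lamChk)) • muC
  let nuChk : Measure 𝒳 :=
    ENNReal.ofReal (|lam - lamChk| / (1 - min lam lamChk)) • mu +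
      ENNReal.ofReal ((1 - max lam lamChk) / (1 - min lam lamChk)) • muCChk
  let kap : Measure (𝒳 × 𝒳) := if lam ≤ lamChk then muC.prod nuChk else nu.prod muCChk
  let pair : Measure (𝒳 × 𝒳 × Bool) :=
    ENNReal.ofReal (min lam lamChk) • mu.map (fun y => (y, y, true)) +
      (1 - ENNReal.ofReal (min lam lamChk)) • kap.map (fun q => (q.1, q.2, false))
  Measure.pi fun n : Fin N => if (n : ℕ) = 0 then Measure.dirac (xf, xcf, false) else pair

/-- The law of the coupled pair of conditional particle systems with frozen trajectories
`x` and `xc` (each relabelled as particle `0` of its system). -/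
noncomputable def coupledLaw (N : ℕ) (m0 : Measure 𝒳) (m : ℕ → Kernel 𝒳 𝒳)
    (G : ℕ → 𝒳 → ℝ) (x xc : ℕ → 𝒳) :
    (t : ℕ) → Measure (Fin (t + 1) → Fin N → 𝒳 × 𝒳 × Bool)
  | 0 => (Measure.pi fun n : Fin N =>
        if (n : ℕ) = 0 then Measure.dirac (x 0, xc 0, false)
        else m0.map fun y => (y, y, true)).map fun s0 => fun _ => s0
  | t + 1 => (coupledLaw N m0 m G x xc t).bind fun s =>
      (coupleStep N (m (t + 1)) (G t) (x (t + 1)) (xc (t + 1)) (s (Fin.last t))).map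
        fun snew => Fin.snoc s snew

/-- Number of coupled particles at time `t` of a coupled-system realisation. -/
def coupledCard {N t : ℕ} (ω : Fin (t + 1) → Fin N → 𝒳 × 𝒳 × Bool) (r : Fin (t + 1)) : ℕ :=
  (Finset.univ.filter fun n : Fin N => (ω r n).2.2 = true).card

/-! ### Residual and systematic resampling -/

/-- Integer part `⌊N W^n⌋` of the scaled weights. -/
noncomputable def floorCount (N : ℕ) (W : Fin N → ℝ) (n : Fin N) : ℕ := ⌊(N : ℝ) * W n⌋₊

/-- Residue `r^n = N W^n - ⌊N W^n⌋`. -/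
noncomputable def residue (N : ℕ) (W : Fin N → ℝ) (n : Fin N) : ℝ :=
  (N : ℝ) * W n - floorCount N W n

/-- Number of offspring of label `n` in the ancestor vector `a`. -/
def countLabel {N : ℕ} (a : Fin N → Fin N) (n : Fin N) : ℕ :=
  (Finset.univ.filter fun j => a j = n).card

/-- Number of offspring of label `n` in `a` excluding slot `b`. -/
def countLabelExcept {N : ℕ} (b : Fin N) (a : Fin N → Fin N) (n : Fin N) : ℕ :=
  ((Finset.univ.erase b).filter fun j => a j = n).card

/-- Label occupying slot `j` when stacking `c n` copies of each label `n`, sequentially. -/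
noncomputable def stackLabel (N : ℕ) (hN : 0 < N) (c : Fin N → ℕ) (j : ℕ) : Fin N :=
  if h : (Finset.univ.filter fun n : Fin N => j < ∑ i ∈ Finset.Iic n, c i).Nonempty
  then (Finset.univ.filter fun n : Fin N => j < ∑ i ∈ Finset.Iic n, c i).min' h
  else ⟨0, hN⟩

/-- Residual resampling before the random permutation: the first `∑ ⌊N W^n⌋` slots are
deterministic copies, the remaining slots are i.i.d. draws from the residual multinomial. -/
noncomputable def residualBase (N : ℕ) (W : Fin N → ℝ) : Measure (Fin N → Fin N) :=
  if hN : 0 < N then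
    Measure.pi fun j : Fin N =>
      if (j : ℕ) < ∑ n, floorCount N W n then
        Measure.dirac (stackLabel N hN (floorCount N W) (j : ℕ))
      else ∑ n : Fin N,
        ENNReal.ofReal (residue N W n / ∑ i, residue N W i) • Measure.dirac n
  else 0

/-- Residual resampling followed by a uniformly random permutation of the slots. -/
noncomputable def residualLaw (N : ℕ) (W : Fin N → ℝ) : Measure (Fin N → Fin N) :=
  (Fintype.card (Equiv.Perm (Fin N)) : ℝ≥0∞)⁻¹ •
    ∑ σ : Equiv.Perm (Fin N), (residualBase N W).map fun v => v ∘ σ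

/-- The label produced by systematic resampling for cursor position `u + n`:
the unique `m` with `S(m-1) ≤ u + n < S(m)`. -/
noncomputable def sysLabel (N : ℕ) (hN : 0 < N) (W : Fin N → ℝ) (u : ℝ) (n : Fin N) :
    Fin N :=
  if h : (Finset.univ.filter fun m : Fin N =>
      u + (n : ℝ) < (N : ℝ) * ∑ j ∈ Finset.Iic m, W j).Nonempty
  then (Finset.univ.filter fun m : Fin N =>
      u + (n : ℝ) < (N : ℝ) * ∑ j ∈ Finset.Iic m, W j).min' h
  else ⟨0, hN⟩

/-- Systematic resampling with cycle randomisation: `U ~ Uniform[0,1)`, a uniformly random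
`N`-cycle `c(n) = n + k`, and `A^n = Ā^{c(n)} = sysLabel U (n + k)`. -/
noncomputable def systematicLaw (N : ℕ) (W : Fin N → ℝ) : Measure (Fin N → Fin N) :=
  if hN : 0 < N then
    (N : ℝ≥0∞)⁻¹ • ∑ k : Fin N,
      ((volume : Measure ℝ).restrict (Set.Ico (0 : ℝ) 1)).map
        fun u => fun n : Fin N => sysLabel N hN W u (n + k)
  else 0

end ParticleGibbs


section

open MeasureTheory ProbabilityTheory Filter
open scoped ENNReal Topology

namespace ParticleGibbs

lemma tangent_bound (D a : ℝ≥0∞) (ha0 : a ≠ 0) (ha : a ≠ ⊤) (hD0 : D ≠ 0) (hD : D ≠ ⊤) :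
    2 * a⁻¹ ≤ D⁻¹ + D * a⁻¹ * a⁻¹ := by
  have hap : 0 < a.toReal := ENNReal.toReal_pos ha0 ha
  have hDp : 0 < D.toReal := ENNReal.toReal_pos hD0 hD
  have hai : a⁻¹ ≠ ⊤ := ENNReal.inv_ne_top.2 ha0
  have hDi : D⁻¹ ≠ ⊤ := ENNReal.inv_ne_top.2 hD0
  rw [← ENNReal.toReal_le_toReal (ENNReal.mul_ne_top (by simp) hai)
    (ENNReal.add_ne_top.2 ⟨hDi, ENNReal.mul_ne_top (ENNReal.mul_ne_top hD hai) hai⟩),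
    ENNReal.toReal_add hDi (ENNReal.mul_ne_top (ENNReal.mul_ne_top hD hai) hai)]
  simp only [ENNReal.toReal_mul, ENNReal.toReal_inv, ENNReal.toReal_ofNat]
  have : (D.toReal)⁻¹ + D.toReal * (a.toReal)⁻¹ * (a.toReal)⁻¹ - 2 * (a.toReal)⁻¹
      = (D.toReal)⁻¹ * (1 - D.toReal * (a.toReal)⁻¹) ^ 2 := by
    field_simp
    ring
  have h2 : 0 ≤ (D.toReal)⁻¹ * (1 - D.toReal * (a.toReal)⁻¹) ^ 2 := by positivity
  linarith

lemma ratio_bound {Ω : Type*} [MeasurableSpace Ω] (μ : Measure Ω) [IsProbabilityMeasure μ]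
    (k : ℕ) (H V : Fin (k + 2) → Ω → ℝ≥0∞) (hH : ∀ i, Measurable (H i))
    (hV : ∀ i, Measurable (V i)) (C η v : ℝ≥0∞) (hC0 : C ≠ 0) (hC : C ≠ ⊤) (hη : η ≠ ⊤)
    (hv : v ≠ ⊤)
    (hVC : ∀ i ω, V i ω ≤ C) (hV0 : ∀ i ω, V i ω ≠ 0)
    (hHi : ∀ i : Fin (k + 1), ∫⁻ ω, H i.succ ω ∂μ = η)
    (hHV : ∀ i j : Fin (k + 1), i ≠ j → ∫⁻ ω, H i.succ ω * V j.succ ω ∂μ ≤ η * v) :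
    (k + 1 : ℝ≥0∞) * (η * ((k : ℝ≥0∞) * v + 2 * C)⁻¹)
      ≤ ∫⁻ ω, (∑ i, H i ω) * (∑ i, V i ω)⁻¹ ∂μ := by
  set a : ℝ≥0∞ := (k : ℝ≥0∞) * v + 2 * C with ha
  have ha0 : a ≠ 0 := by
    simp [ha, hC0]
  have hat : a ≠ ⊤ := by
    simp [ha, ENNReal.mul_eq_top, hC, hv]
  have hDm : Measurable fun ω => ∑ i, V i ω := by fun_prop
  have key : ∀ i : Fin (k + 1), η * a⁻¹ ≤ ∫⁻ ω, H i.succ ω * (∑ j, V j ω)⁻¹ ∂μ := by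
    intro i
    have h1 : ∫⁻ ω, H i.succ ω * (∑ j, V j ω) ∂μ ≤ η * a := by
      have hb : ∀ j : Fin (k+2), ∫⁻ ω, H i.succ ω * V j ω ∂μ ≤ η * C := by
        intro j
        calc ∫⁻ ω, H i.succ ω * V j ω ∂μ ≤ ∫⁻ ω, H i.succ ω * C ∂μ :=
              lintegral_mono fun ω => by gcongr; exact hVC j ω
          _ = η * C := by rw [lintegral_mul_const _ (hH _), hHi]
      simp_rw [Finset.mul_sum]
      rw [lintegral_finsetSum _ (by fun_prop), Fin.sum_univ_succ,
        ← Finset.add_sum_erase _ _ (Finset.mem_univ i)]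
      calc _ ≤ η * C + (η * C + ∑ j ∈ Finset.univ.erase i, η * v) := by
            gcongr with j hj
            · exact hb _
            · exact hb _
            · exact hHV i j (Finset.ne_of_mem_erase hj).symm
        _ = η * a := by
            simp only [Finset.sum_const, Finset.card_erase_of_mem (Finset.mem_univ i),
              Finset.card_univ, Fintype.card_fin, Nat.add_sub_cancel, nsmul_eq_mul, ha]
            ring
    have h2 : 2 * (η * a⁻¹) ≤ ∫⁻ ω, H i.succ ω * (∑ j, V j ω)⁻¹ ∂μ + η * a⁻¹ := by
      calc 2 * (η * a⁻¹) = ∫⁻ ω, H i.succ ω * (2 * a⁻¹) ∂μ := by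
            rw [lintegral_mul_const _ (hH _), hHi]; ring
        _ ≤ ∫⁻ ω, (H i.succ ω * (∑ j, V j ω)⁻¹ + H i.succ ω * (∑ j, V j ω) * (a⁻¹ * a⁻¹)) ∂μ := by
            apply lintegral_mono
            intro ω
            have := tangent_bound (∑ j, V j ω) a ha0 hat
              (by simp only [ne_eq, Finset.sum_eq_zero_iff, not_forall]
                  exact ⟨0, Finset.mem_univ _, hV0 0 ω⟩)
              (ENNReal.sum_ne_top.2 fun j _ => ne_top_of_le_ne_top hC (hVC j ω))
            calc H i.succ ω * (2 * a⁻¹)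
                ≤ H i.succ ω * ((∑ j, V j ω)⁻¹ + (∑ j, V j ω) * a⁻¹ * a⁻¹) := by gcongr
              _ = _ := by ring
        _ = ∫⁻ ω, H i.succ ω * (∑ j, V j ω)⁻¹ ∂μ
              + (∫⁻ ω, H i.succ ω * (∑ j, V j ω) ∂μ) * (a⁻¹ * a⁻¹) := by
            rw [lintegral_add_left (by fun_prop), lintegral_mul_const _ (by fun_prop)]
        _ ≤ ∫⁻ ω, H i.succ ω * (∑ j, V j ω)⁻¹ ∂μ + (η * a) * (a⁻¹ * a⁻¹) := by gcongr
        _ = _ := by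
            congr 1
            calc (η * a) * (a⁻¹ * a⁻¹) = η * (a * a⁻¹) * a⁻¹ := by ring
              _ = _ := by rw [ENNReal.mul_inv_cancel ha0 hat, mul_one]
    rw [two_mul] at h2
    exact (ENNReal.add_le_add_iff_right
      (ENNReal.mul_ne_top hη (ENNReal.inv_ne_top.2 ha0))).1 h2
  calc (k + 1 : ℝ≥0∞) * (η * a⁻¹) = ∑ i : Fin (k + 1), η * a⁻¹ := by
        simp
    _ ≤ ∑ i : Fin (k + 1), ∫⁻ ω, H i.succ ω * (∑ j, V j ω)⁻¹ ∂μ :=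
        Finset.sum_le_sum fun i _ => key i
    _ = ∫⁻ ω, ∑ i : Fin (k + 1), H i.succ ω * (∑ j, V j ω)⁻¹ ∂μ := by
        rw [lintegral_finsetSum _ (by fun_prop)]
    _ ≤ _ := by
        apply lintegral_mono
        intro ω
        simp only
        rw [Fin.sum_univ_succ (fun i => H i ω), add_mul, Finset.sum_mul]
        exact le_add_self

lemma lintegral_pi_single {ι : Type*} [Fintype ι] {X : ι → Type*} [∀ i, MeasurableSpace (X i)]
    (μ : ∀ i, Measure (X i)) [∀ i, IsProbabilityMeasure (μ i)] (i : ι) (f : X i → ℝ≥0∞)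
    (hf : Measurable f) : ∫⁻ x, f (x i) ∂(Measure.pi μ) = ∫⁻ x, f x ∂(μ i) := by
  rw [← (measurePreserving_eval μ i).map_eq, lintegral_map hf (measurable_pi_apply i)]

lemma lintegral_pi_pair {ι : Type*} [Fintype ι] {X : ι → Type*} [∀ i, MeasurableSpace (X i)]
    (μ : ∀ i, Measure (X i)) [∀ i, IsProbabilityMeasure (μ i)] (i j : ι) (hij : i ≠ j)
    (f : X i → ℝ≥0∞) (g : X j → ℝ≥0∞)
    (hf : Measurable f) (hg : Measurable g) :
    ∫⁻ x, f (x i) * g (x j) ∂(Measure.pi μ) = (∫⁻ x, f x ∂(μ i)) * ∫⁻ x, g x ∂(μ j) := by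
  have hind : iIndepFun (fun i (x : ∀ i, X i) => x i) (Measure.pi μ) :=
    iIndepFun_pi (X := fun i x => x) (fun i => aemeasurable_id)
  have h2 := (hind.indepFun hij).comp hf hg
  have := lintegral_mul_eq_lintegral_mul_lintegral_of_indepFun
    (hf.comp (measurable_pi_apply i)) (hg.comp (measurable_pi_apply j)) h2
  rw [← lintegral_pi_single μ i f hf, ← lintegral_pi_single μ j g hg]
  exact this

lemma measurable_pi_measure {ι α β : Type*} [Fintype ι] [MeasurableSpace α] [MeasurableSpace β]
    (κ : ι → α → Measure β) (hκ : ∀ i, Measurable (κ i))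
    (hp : ∀ i a, IsProbabilityMeasure (κ i a)) :
    Measurable fun a => Measure.pi fun i => κ i a := by
  refine Measurable.measure_of_isPiSystem_of_isProbabilityMeasure generateFrom_pi.symm
    isPiSystem_pi ?_
  rintro _ ⟨s, hs, rfl⟩
  simp_rw [Measure.pi_pi]
  refine Finset.measurable_prod _ fun i _ => ?_
  exact (Measure.measurable_coe (hs i (Set.mem_univ i))).comp (hκ i)

lemma measurable_map_param {α β γ : Type*} [MeasurableSpace α] [MeasurableSpace β]
    [MeasurableSpace γ] (κ : α → Measure β) (hκ : Measurable κ)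
    (hp : ∀ a, IsProbabilityMeasure (κ a)) (f : α → β → γ)
    (hf : Measurable fun q : α × β => f q.1 q.2) :
    Measurable fun a => (κ a).map (f a) := by
  let K : Kernel α β := ⟨κ, hκ⟩
  have : IsMarkovKernel K := ⟨hp⟩
  refine Measure.measurable_of_measurable_coe _ fun s hs => ?_
  have hfa : ∀ a, Measurable (f a) := fun a => hf.comp measurable_prodMk_left
  simp_rw [Measure.map_apply (hfa _) hs]
  exact Kernel.measurable_kernel_prodMk_left (κ := K) (hf hs)

lemma measurable_bind_finite {α ι γ : Type*} [MeasurableSpace α] [Fintype ι] [MeasurableSpace ι]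
    [MeasurableSingletonClass ι]
    [MeasurableSpace γ] (R : α → Measure ι) (hR : Measurable R) (κ : α → ι → Measure γ)
    (hκ : ∀ i, Measurable fun a => κ a i) :
    Measurable fun a => (R a).bind (κ a) := by
  refine Measure.measurable_of_measurable_coe _ fun s hs => ?_
  have : ∀ a, ((R a).bind (κ a)) s = ∑ i, κ a i s * R a {i} := fun a => by
    rw [Measure.bind_apply hs (measurable_of_finite _).aemeasurable, lintegral_fintype]
  simp_rw [this]
  refine Finset.measurable_sum _ fun i _ => ?_
  exact ((Measure.measurable_coe hs).comp (hκ i)).mul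
    ((Measure.measurable_coe (measurableSet_singleton i)).comp hR)

end ParticleGibbs

end

section

open MeasureTheory ProbabilityTheory Filter
open scoped ENNReal Topology

namespace ParticleGibbs

set_option linter.unusedSectionVars false

variable {𝒳 : Type*} [MeasurableSpace 𝒳]

lemma traj_last {N t : ℕ} (x : Fin (t + 1) → Fin N → 𝒳) (a : Fin t → Fin N → Fin N)
    (n : Fin N) : traj x a n (Fin.last t) = x (Fin.last t) n := by
  simp [traj, lineage, ancAux]

lemma ancAux_snoc {N t : ℕ} (a : Fin t → Fin N → Fin N) (b : Fin N → Fin N) (n : Fin N)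
    (k : ℕ) (hk : k ≤ t) :
    ancAux (t + 1) (Fin.snoc a b : Fin (t + 1) → Fin N → Fin N) n (k + 1)
      = ancAux t a (b n) k := by
  induction k with
  | zero =>
    have h : t + 1 - (0 + 1) < t + 1 := by omega
    rw [show ancAux t a (b n) 0 = b n from rfl, ancAux, dif_pos h]
    simp [ancAux, Fin.snoc]
  | succ k ih =>
    have h : t + 1 - (k + 1 + 1) < t + 1 := by omega
    have h2 : t - (k + 1) < t := by omega
    have h3 : t + 1 - (k + 1 + 1) = t - (k + 1) := by omega
    rw [ancAux, dif_pos h, ih (by omega), ancAux, dif_pos h2]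
    simp [Fin.snoc, h2]

lemma traj_snoc {N t : ℕ} (x : Fin (t + 1) → Fin N → 𝒳) (y : Fin N → 𝒳)
    (a : Fin t → Fin N → Fin N) (b : Fin N → Fin N) (n : Fin N) :
    traj (Fin.snoc x y : Fin (t + 2) → Fin N → 𝒳) (Fin.snoc a b : Fin (t + 1) → Fin N → Fin N) n
      = (Fin.snoc (traj x a (b n)) (y n) : Fin (t + 2) → 𝒳) := by
  funext s
  refine Fin.lastCases ?_ (fun s => ?_) s
  · rw [traj_last]; simp
  · have h : t + 1 - (s : ℕ) = (t - s) + 1 := by omega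
    simp only [traj, lineage, Fin.snoc_castSucc, Fin.val_castSucc]
    rw [h, ancAux_snoc _ _ _ _ (by omega)]

lemma measurable_traj {N t : ℕ} (n : Fin N) :
    Measurable fun q : (Fin (t + 1) → Fin N → 𝒳) × (Fin t → Fin N → Fin N) =>
      traj q.1 q.2 n := by
  refine measurable_from_prod_countable_left fun a => ?_
  refine measurable_pi_lambda _ fun s => ?_
  simp only [traj]
  fun_prop

lemma measurable_weight {N : ℕ} (G : 𝒳 → ℝ) (hG : Measurable G) (n : Fin N) :
    Measurable fun x : Fin N → 𝒳 => weight G x n := by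
  unfold weight
  fun_prop

lemma measurable_select {N : ℕ} (G : 𝒳 → ℝ) (hG : Measurable G) :
    Measurable fun x : Fin N → 𝒳 => select G x := by
  refine Measure.measurable_of_measurable_coe _ fun s hs => ?_
  simp only [select, Measure.finsetSum_apply, Measure.smul_apply, smul_eq_mul]
  refine Finset.measurable_sum _ fun n _ => ?_
  exact (measurable_weight G hG n).ennreal_ofReal.mul_const _

lemma ofReal_weight {k : ℕ} (G : 𝒳 → ℝ) (hG : ∀ x, 0 < G x) (x : Fin (k + 2) → 𝒳)
    (n : Fin (k + 2)) : ENNReal.ofReal (weight G x n)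
      = ENNReal.ofReal (G (x n)) * (∑ j, ENNReal.ofReal (G (x j)))⁻¹ := by
  rw [weight, ENNReal.ofReal_div_of_pos (Finset.sum_pos (fun j _ => hG _) ⟨0, Finset.mem_univ _⟩),
    ENNReal.ofReal_sum_of_nonneg (fun j _ => (hG _).le), div_eq_mul_inv]

lemma sumG_ne_zero {k : ℕ} (G : 𝒳 → ℝ) (hG : ∀ x, 0 < G x) (x : Fin (k + 2) → 𝒳) :
    (∑ j, ENNReal.ofReal (G (x j))) ≠ 0 := by
  simp only [ne_eq, Finset.sum_eq_zero_iff, not_forall]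
  exact ⟨0, Finset.mem_univ _, by simpa using hG _⟩

lemma sumG_ne_top {k : ℕ} (G : 𝒳 → ℝ) (x : Fin (k + 2) → 𝒳) :
    (∑ j, ENNReal.ofReal (G (x j))) ≠ ⊤ :=
  ENNReal.sum_ne_top.2 fun _ _ => ENNReal.ofReal_ne_top

lemma lintegral_select {k : ℕ} (G : 𝒳 → ℝ) (hG : ∀ x, 0 < G x) (x : Fin (k + 2) → 𝒳)
    (f : Fin (k + 2) → ℝ≥0∞) : ∫⁻ n, f n ∂(select G x)
      = (∑ n, ENNReal.ofReal (G (x n)) * f n) * (∑ j, ENNReal.ofReal (G (x j)))⁻¹ := by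
  simp only [select, lintegral_finsetSum_measure, lintegral_smul_measure, lintegral_dirac,
    ofReal_weight G hG, smul_eq_mul, Finset.sum_mul]
  exact Finset.sum_congr rfl fun n _ => by ring

lemma isProb_select {k : ℕ} (G : 𝒳 → ℝ) (hG : ∀ x, 0 < G x) (x : Fin (k + 2) → 𝒳) :
    IsProbabilityMeasure (select G x) := by
  constructor
  have := lintegral_select G hG x (fun _ => 1)
  simp only [lintegral_one, mul_one] at this
  rw [this, ENNReal.mul_inv_cancel (sumG_ne_zero G hG x) (sumG_ne_top G x)]

lemma select_singleton_ne_zero {k : ℕ} (G : 𝒳 → ℝ) (hG : ∀ x, 0 < G x) (x : Fin (k + 2) → 𝒳)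
    (n : Fin (k + 2)) : select G x {n} ≠ 0 := by
  rw [← lintegral_indicator_one (measurableSet_singleton n), lintegral_select G hG x]
  refine mul_ne_zero ?_ (ENNReal.inv_ne_zero.2 (sumG_ne_top G x))
  simp only [ne_eq, Finset.sum_eq_zero_iff, not_forall]
  exact ⟨n, Finset.mem_univ _, by simpa using hG _⟩

/-- Law of the ancestors in the conditional particle filter with label `0` frozen. -/
noncomputable def ancLaw {k : ℕ} (G : 𝒳 → ℝ) (x : Fin (k + 2) → 𝒳) :
    Measure (Fin (k + 2) → Fin (k + 2)) :=
  Measure.pi fun n => if n = 0 then Measure.dirac 0 else select G x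

lemma isProb_ite {α : Type*} [MeasurableSpace α] {c : Prop} [Decidable c] (μ ν : Measure α)
    [IsProbabilityMeasure μ] [IsProbabilityMeasure ν] :
    IsProbabilityMeasure (if c then μ else ν) := by
  split_ifs <;> infer_instance

lemma condAncestor_eq {k : ℕ} (G : 𝒳 → ℝ) (hG : ∀ x, 0 < G x) (x : Fin (k + 2) → 𝒳) :
    condAncestor (multinomialR G x) 0 0 = ancLaw G x := by
  have := isProb_select G hG x
  have : ∀ n : Fin (k + 2), IsProbabilityMeasure
    (if n = 0 then Measure.dirac (0 : Fin (k + 2)) else select G x) := fun n => isProb_ite _ _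
  symm
  refine Measure.pi_eq fun s hs => ?_
  have hE : {a : Fin (k + 2) → Fin (k + 2) | a 0 = 0}
      = Set.univ.pi fun n => if n = 0 then {0} else Set.univ := by
    ext a
    simp only [Set.mem_ofPred_eq, Set.mem_pi, Set.mem_univ, forall_const]
    constructor
    · intro h n
      split_ifs with hn
      · subst hn; simpa using h
      · trivial
    · intro h; simpa using h 0
  have h1 : multinomialR G x {a | a 0 = 0} = select G x {0} := by
    rw [hE, multinomialR, Measure.pi_pi, Fin.prod_univ_succ]
    simp [Fin.succ_ne_zero]
  have h2 : multinomialR G x (Set.univ.pi s ∩ {a | a 0 = 0})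
      = select G x (s 0 ∩ {0}) * ∏ i : Fin (k + 1), select G x (s i.succ) := by
    rw [hE, ← Set.pi_inter_distrib, multinomialR, Measure.pi_pi, Fin.prod_univ_succ]
    simp [Fin.succ_ne_zero]
  have h3 : select G x (s 0 ∩ {0}) = select G x {0} * Measure.dirac (0 : Fin (k + 2)) (s 0) := by
    by_cases h : (0 : Fin (k + 2)) ∈ s 0
    · rw [Set.inter_eq_right.2 (by simpa using h)]
      simp [h]
    · rw [Set.inter_singleton_eq_empty.2 h]
      simp [h]
  rw [condAncestor, Measure.smul_apply, Measure.restrict_apply (MeasurableSet.univ_pi hs), h1, h2,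
    h3, Fin.prod_univ_succ (n := k + 1) (fun n : Fin (k + 2) =>
      (if n = 0 then Measure.dirac (0 : Fin (k + 2)) else select G x) (s n)),
    smul_eq_mul, ← mul_assoc, ← mul_assoc, ENNReal.inv_mul_cancel (select_singleton_ne_zero G hG x 0) (measure_ne_top _ _)]
  simp [Fin.succ_ne_zero]

lemma isProb_ancLaw {k : ℕ} (G : 𝒳 → ℝ) (hG : ∀ x, 0 < G x) (x : Fin (k + 2) → 𝒳) :
    IsProbabilityMeasure (ancLaw G x) := by
  have := isProb_select G hG x
  have : ∀ n : Fin (k + 2), IsProbabilityMeasure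
    (if n = 0 then Measure.dirac (0 : Fin (k + 2)) else select G x) := fun n => isProb_ite _ _
  unfold ancLaw
  infer_instance

lemma measurable_ancLaw {k : ℕ} (G : 𝒳 → ℝ) (hGm : Measurable G) (hG : ∀ x, 0 < G x) :
    Measurable fun x : Fin (k + 2) → 𝒳 => ancLaw G x := by
  have := isProb_select (k := k) G hG
  refine measurable_pi_measure
    (fun (n : Fin (k + 2)) x => if n = 0 then Measure.dirac (0 : Fin (k + 2)) else select G x) ?_ ?_
  · intro n
    by_cases hn : n = 0
    · simp [hn]
    · simpa [hn] using measurable_select G hGm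
  · intro n x
    exact isProb_ite _ _

/-- Law of the new particle positions given the ancestors. -/
noncomputable def moveLaw {k : ℕ} (M : Kernel 𝒳 𝒳) (y : 𝒳) (x : Fin (k + 2) → 𝒳)
    (a : Fin (k + 2) → Fin (k + 2)) : Measure (Fin (k + 2) → 𝒳) :=
  Measure.pi fun n => if n = 0 then Measure.dirac y else M (x (a n))

lemma isProb_moveLaw {k : ℕ} (M : Kernel 𝒳 𝒳) [IsMarkovKernel M] (y : 𝒳) (x : Fin (k + 2) → 𝒳)
    (a : Fin (k + 2) → Fin (k + 2)) : IsProbabilityMeasure (moveLaw M y x a) := by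
  have : ∀ n : Fin (k + 2), IsProbabilityMeasure
    (if n = 0 then Measure.dirac y else M (x (a n))) := fun n => isProb_ite _ _
  unfold moveLaw
  infer_instance

lemma measurable_moveLaw {k : ℕ} (M : Kernel 𝒳 𝒳) [IsMarkovKernel M] (y : 𝒳)
    (a : Fin (k + 2) → Fin (k + 2)) :
    Measurable fun x : Fin (k + 2) → 𝒳 => moveLaw M y x a := by
  refine measurable_pi_measure
    (fun (n : Fin (k + 2)) (x : Fin (k + 2) → 𝒳) => if n = 0 then Measure.dirac y else M (x (a n))) ?_ ?_
  · intro n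
    by_cases hn : n = 0
    · simp [hn]
    · simp only [hn, if_false]
      exact M.measurable.comp (measurable_pi_apply _)
  · intro n x
    exact isProb_ite _ _

/-- One step of the conditional particle filter. -/
noncomputable def stepLaw {k t : ℕ} (M : Kernel 𝒳 𝒳) (G : 𝒳 → ℝ) (y : 𝒳)
    (p : (Fin (t + 1) → Fin (k + 2) → 𝒳) × (Fin t → Fin (k + 2) → Fin (k + 2))) :
    Measure ((Fin (t + 2) → Fin (k + 2) → 𝒳) × (Fin (t + 1) → Fin (k + 2) → Fin (k + 2))) :=
  (ancLaw G (p.1 (Fin.last t))).bind fun a =>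
    (moveLaw M y (p.1 (Fin.last t)) a).map fun xnew => (Fin.snoc p.1 xnew, Fin.snoc p.2 a)

lemma measurable_snoc_fix {n : ℕ} {α : Type*} [MeasurableSpace α] :
    Measurable fun q : (Fin n → α) × α => (Fin.snoc q.1 q.2 : Fin (n + 1) → α) := by
  refine measurable_pi_lambda _ fun s => ?_
  refine Fin.lastCases ?_ (fun s => ?_) s
  · simpa using measurable_snd
  · simp only [Fin.snoc_castSucc]
    fun_prop

lemma measurable_stepLaw {k t : ℕ} (M : Kernel 𝒳 𝒳) [IsMarkovKernel M] (G : 𝒳 → ℝ)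
    (hGm : Measurable G) (hG : ∀ x, 0 < G x) (y : 𝒳) :
    Measurable (stepLaw (k := k) (t := t) M G y) := by
  refine measurable_bind_finite _ ?_ _ fun a => ?_
  · exact (measurable_ancLaw G hGm hG).comp ((measurable_pi_apply _).comp measurable_fst)
  · refine measurable_map_param _ ?_ (fun p => isProb_moveLaw M y _ a)
      (fun (p : (Fin (t + 1) → Fin (k + 2) → 𝒳) × (Fin t → Fin (k + 2) → Fin (k + 2))) xnew =>
        ((Fin.snoc p.1 xnew, Fin.snoc p.2 a) :
          (Fin (t + 2) → Fin (k + 2) → 𝒳) × (Fin (t + 1) → Fin (k + 2) → Fin (k + 2)))) ?_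
    · exact (measurable_moveLaw M y a).comp ((measurable_pi_apply _).comp measurable_fst)
    · refine Measurable.prodMk ?_ ?_
      · exact measurable_snoc_fix.comp ((measurable_fst.comp measurable_fst).prodMk measurable_snd)
      · exact (measurable_of_finite (fun b : Fin t → Fin (k + 2) → Fin (k + 2) =>
          (Fin.snoc b a : Fin (t + 1) → Fin (k + 2) → Fin (k + 2)))).comp
          (measurable_snd.comp measurable_fst)

lemma measurable_snoc_pair {k t : ℕ} 
    (p : (Fin (t + 1) → Fin (k + 2) → 𝒳) × (Fin t → Fin (k + 2) → Fin (k + 2)))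
    (a : Fin (k + 2) → Fin (k + 2)) : 
    Measurable fun xnew => ((Fin.snoc p.1 xnew, Fin.snoc p.2 a) : 
      (Fin (t + 2) → Fin (k + 2) → 𝒳) × (Fin (t + 1) → Fin (k + 2) → Fin (k + 2))) :=
  (measurable_snoc_fix.comp measurable_prodMk_left).prodMk measurable_const

lemma lintegral_stepLaw {k t : ℕ} (M : Kernel 𝒳 𝒳) (G : 𝒳 → ℝ) (y : 𝒳)
    (p : (Fin (t + 1) → Fin (k + 2) → 𝒳) × (Fin t → Fin (k + 2) → Fin (k + 2)))
    (F : (Fin (t + 2) → Fin (k + 2) → 𝒳) × (Fin (t + 1) → Fin (k + 2) → Fin (k + 2)) → ℝ≥0∞)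
    (hF : Measurable F) :
    ∫⁻ q, F q ∂(stepLaw M G y p) = ∫⁻ a, ∫⁻ xnew, F (Fin.snoc p.1 xnew, Fin.snoc p.2 a)
      ∂(moveLaw M y (p.1 (Fin.last t)) a) ∂(ancLaw G (p.1 (Fin.last t))) := by
  rw [stepLaw, Measure.lintegral_bind (measurable_of_finite _).aemeasurable hF.aemeasurable]
  refine lintegral_congr fun a => ?_
  rw [lintegral_map hF (measurable_snoc_pair p a)]

lemma isProb_stepLaw {k t : ℕ} (M : Kernel 𝒳 𝒳) [IsMarkovKernel M] (G : 𝒳 → ℝ)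
    (hG : ∀ x, 0 < G x) (y : 𝒳)
    (p : (Fin (t + 1) → Fin (k + 2) → 𝒳) × (Fin t → Fin (k + 2) → Fin (k + 2))) :
    IsProbabilityMeasure (stepLaw M G y p) := by
  constructor
  have h1 := isProb_ancLaw G hG (p.1 (Fin.last t))
  have h2 := isProb_moveLaw M y (p.1 (Fin.last t))
  have := lintegral_stepLaw M G y p (fun _ => 1) measurable_const
  simpa using this

lemma cpfSystem_succ {k : ℕ} (m0 : Measure 𝒳) (m : ℕ → Kernel 𝒳 𝒳) (G : ℕ → 𝒳 → ℝ)
    (hG : ∀ t x, 0 < G t x) (z : ℕ → 𝒳) (t : ℕ) :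
    cpfSystem (k + 2) m0 m (fun t => multinomialR (G t)) z (fun _ => 0) (t + 1)
      = (cpfSystem (k + 2) m0 m (fun t => multinomialR (G t)) z (fun _ => 0) t).bind
        (stepLaw (m (t + 1)) (G t) (z (t + 1))) := by
  rw [cpfSystem]
  congr 1
  funext p
  rw [condAncestor_eq _ (hG t)]
  rfl

/-- Law of the initial particles. -/
noncomputable def initLaw {k : ℕ} (m0 : Measure 𝒳) (y : 𝒳) : Measure (Fin (k + 2) → 𝒳) :=
  Measure.pi fun n => if n = 0 then Measure.dirac y else m0

lemma isProb_initLaw {k : ℕ} (m0 : Measure 𝒳) [IsProbabilityMeasure m0] (y : 𝒳) :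
    IsProbabilityMeasure (initLaw (k := k) m0 y) := by
  have : ∀ n : Fin (k + 2), IsProbabilityMeasure
    (if n = 0 then Measure.dirac y else m0) := fun n => isProb_ite _ _
  unfold initLaw
  infer_instance

lemma measurable_initMap {k : ℕ} : Measurable fun x0 : Fin (k + 2) → 𝒳 => 
    ((fun _ => x0, fun j => j.elim0) : 
      (Fin (0 + 1) → Fin (k + 2) → 𝒳) × (Fin 0 → Fin (k + 2) → Fin (k + 2))) :=
  (measurable_pi_lambda _ fun _ => measurable_id).prodMk measurable_const

lemma isProb_cpfSystem {k : ℕ} (m0 : Measure 𝒳) [IsProbabilityMeasure m0] (m : ℕ → Kernel 𝒳 𝒳)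
    (hm : ∀ t, IsMarkovKernel (m t)) (G : ℕ → 𝒳 → ℝ) (hGm : ∀ t, Measurable (G t))
    (hG : ∀ t x, 0 < G t x) (z : ℕ → 𝒳) (t : ℕ) :
    IsProbabilityMeasure
      (cpfSystem (k + 2) m0 m (fun t => multinomialR (G t)) z (fun _ => 0) t) := by
  induction t with
  | zero =>
    have := isProb_initLaw (k := k) m0 (z 0)
    exact Measure.isProbabilityMeasure_map (μ := initLaw m0 (z 0)) 
      measurable_initMap.aemeasurable
  | succ t ih =>
    have := hm (t + 1)
    rw [cpfSystem_succ m0 m G hG]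
    constructor
    rw [Measure.bind_apply MeasurableSet.univ 
      (measurable_stepLaw _ _ (hGm t) (hG t) _).aemeasurable]
    have h := isProb_stepLaw (k := k) (t := t) (m (t + 1)) (G t) (hG t) (z (t + 1))
    simp

end ParticleGibbs

end

section

open MeasureTheory ProbabilityTheory Filter
open scoped ENNReal Topology

namespace ParticleGibbs

set_option linter.unusedSectionVars false

variable {𝒳 : Type*} [MeasurableSpace 𝒳]

/-- The one-step minorisation constant. -/
noncomputable def alphaStep (C : ℝ≥0∞) (k : ℕ) : ℝ≥0∞ :=
  (k + 1 : ℝ≥0∞) * ((k : ℝ≥0∞) + 2 * C * C)⁻¹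

lemma tendsto_alphaStep (C : ℝ≥0∞) (hC0 : C ≠ 0) (hC : C ≠ ⊤) :
    Tendsto (alphaStep C) atTop (𝓝 1) := by
  have hc : 0 < C.toReal := ENNReal.toReal_pos hC0 hC
  have h1 : ∀ k : ℕ, alphaStep C k
      = ENNReal.ofReal (((k : ℝ) + 1) / ((k : ℝ) + 2 * C.toReal * C.toReal)) := by
    intro k
    rw [ENNReal.ofReal_div_of_pos (by positivity), alphaStep, div_eq_mul_inv,
      ENNReal.ofReal_add (by positivity) (by positivity),
      ENNReal.ofReal_add (by positivity) (by positivity),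
      ENNReal.ofReal_mul (by positivity), ENNReal.ofReal_mul (by positivity),
      ENNReal.ofReal_toReal hC]
    simp
  have h2 : Tendsto (fun k : ℕ => ((k : ℝ) + 1) / ((k : ℝ) + 2 * C.toReal * C.toReal))
      atTop (𝓝 1) := by
    have h3 : Tendsto (fun k : ℕ => 1 + (1 - 2 * C.toReal * C.toReal) /
        ((k : ℝ) + 2 * C.toReal * C.toReal)) atTop (𝓝 (1 + 0)) := by
      refine tendsto_const_nhds.add (Tendsto.div_atTop tendsto_const_nhds ?_)
      exact tendsto_atTop_add_const_right _ _ tendsto_natCast_atTop_atTop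
    rw [add_zero] at h3
    refine h3.congr fun k => ?_
    have : (k : ℝ) + 2 * C.toReal * C.toReal ≠ 0 := by positivity
    field_simp
    ring
  have h4 := (ENNReal.continuous_ofReal.tendsto 1).comp h2
  rw [ENNReal.ofReal_one] at h4
  exact h4.congr fun k => (h1 k).symm

lemma ratio_bound' {Ω : Type*} [MeasurableSpace Ω] (μ : Measure Ω) [IsProbabilityMeasure μ]
    (k : ℕ) (H V : Fin (k + 2) → Ω → ℝ≥0∞) (hH : ∀ i, Measurable (H i))
    (hV : ∀ i, Measurable (V i)) (C η v : ℝ≥0∞) (hC0 : C ≠ 0) (hC : C ≠ ⊤) (hη : η ≠ ⊤)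
    (hv : v ≠ ⊤) (hCv : C⁻¹ ≤ v)
    (hVC : ∀ i ω, V i ω ≤ C) (hV0 : ∀ i ω, V i ω ≠ 0)
    (hHi : ∀ i : Fin (k + 1), ∫⁻ ω, H i.succ ω ∂μ = η)
    (hHV : ∀ i j : Fin (k + 1), i ≠ j → ∫⁻ ω, H i.succ ω * V j.succ ω ∂μ ≤ η * v) :
    alphaStep C k * (η * v⁻¹) ≤ ∫⁻ ω, (∑ i, H i ω) * (∑ i, V i ω)⁻¹ ∂μ := by
  refine le_trans ?_ (ratio_bound μ k H V hH hV C η v hC0 hC hη hv hVC hV0 hHi hHV)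
  have hv0 : v ≠ 0 := by
    rintro rfl
    simp [hC] at hCv
  have h1 : (k : ℝ≥0∞) * v + 2 * C ≤ ((k : ℝ≥0∞) + 2 * C * C) * v := by
    have : 2 * C ≤ 2 * C * C * v := by
      calc 2 * C = 2 * C * (C * C⁻¹) := by rw [ENNReal.mul_inv_cancel hC0 hC, mul_one]
        _ ≤ 2 * C * (C * v) := by gcongr
        _ = _ := by ring
    calc (k : ℝ≥0∞) * v + 2 * C ≤ (k : ℝ≥0∞) * v + 2 * C * C * v := by gcongr
      _ = _ := by ring
  calc alphaStep C k * (η * v⁻¹)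
      = (k + 1 : ℝ≥0∞) * (η * ((((k : ℝ≥0∞) + 2 * C * C))⁻¹ * v⁻¹)) := by
        rw [alphaStep]; ring
    _ = (k + 1 : ℝ≥0∞) * (η * (((k : ℝ≥0∞) + 2 * C * C) * v)⁻¹) := by
        rw [ENNReal.mul_inv (Or.inr hv) (Or.inr hv0)]
    _ ≤ _ := by gcongr

/-- Unnormalised Feynman–Kac functional. -/
noncomputable def Gam (m0 : Measure 𝒳) (m : ℕ → Kernel 𝒳 𝒳) (G : ℕ → 𝒳 → ℝ) :
    (t : ℕ) → ((Fin (t + 1) → 𝒳) → ℝ≥0∞) → ℝ≥0∞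
  | 0, h => ∫⁻ x, h (fun _ => x) ∂m0
  | t + 1, h => Gam m0 m G t fun y => ENNReal.ofReal (G t (y (Fin.last t))) *
      ∫⁻ x, h (Fin.snoc y x : Fin (t + 2) → 𝒳) ∂(m (t + 1) (y (Fin.last t)))

lemma measurable_back {t : ℕ} (M : Kernel 𝒳 𝒳) [IsMarkovKernel M] (G : 𝒳 → ℝ)
    (hG : Measurable G) (h : (Fin (t + 2) → 𝒳) → ℝ≥0∞) (hh : Measurable h) :
    Measurable fun y : Fin (t + 1) → 𝒳 => ENNReal.ofReal (G (y (Fin.last t))) *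
      ∫⁻ x, h (Fin.snoc y x : Fin (t + 2) → 𝒳) ∂(M (y (Fin.last t))) := by
  refine Measurable.mul (by fun_prop) ?_
  have := Measurable.lintegral_kernel_prod_right'
    (κ := M.comap (fun y : Fin (t + 1) → 𝒳 => y (Fin.last t)) (measurable_pi_apply _))
    (hh.comp measurable_snoc_fix)
  simpa using this

lemma Gam_add (m0 : Measure 𝒳) (m : ℕ → Kernel 𝒳 𝒳) (hm : ∀ t, IsMarkovKernel (m t))
    (G : ℕ → 𝒳 → ℝ) (hGm : ∀ t, Measurable (G t)) (t : ℕ) :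
    ∀ h1 h2 : (Fin (t + 1) → 𝒳) → ℝ≥0∞, Measurable h1 → Measurable h2 →
      Gam m0 m G t (fun y => h1 y + h2 y) = Gam m0 m G t h1 + Gam m0 m G t h2 := by
  induction t with
  | zero =>
    intro h1 h2 hh1 hh2
    simp only [Gam]
    rw [lintegral_add_left]
    exact hh1.comp (measurable_pi_lambda _ fun _ => measurable_id)
  | succ t ih =>
    intro h1 h2 hh1 hh2
    have := hm (t + 1)
    simp only [Gam]
    rw [← ih _ _ (measurable_back _ _ (hGm t) _ hh1) (measurable_back _ _ (hGm t) _ hh2)]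
    congr 1
    funext y
    rw [lintegral_add_left, mul_add]
    exact hh1.comp (measurable_snoc_fix.comp measurable_prodMk_left)

/-- Lower bound on the mean of `V` under every one-step law at time `t`. -/
def lowOK (m0 : Measure 𝒳) (m : ℕ → Kernel 𝒳 𝒳) : ℕ → (𝒳 → ℝ≥0∞) → ℝ≥0∞ → Prop
  | 0, V, C => C⁻¹ ≤ ∫⁻ x, V x ∂m0
  | t + 1, V, C => ∀ x', C⁻¹ ≤ ∫⁻ x, V x ∂(m (t + 1) x')

lemma lintegral_le_of_le {α : Type*} [MeasurableSpace α] (μ : Measure α) [IsProbabilityMeasure μ]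
    (f : α → ℝ≥0∞) (C : ℝ≥0∞) (hf : ∀ x, f x ≤ C) : ∫⁻ x, f x ∂μ ≤ C := by
  calc ∫⁻ x, f x ∂μ ≤ ∫⁻ _, C ∂μ := lintegral_mono hf
    _ = C := by simp

/-- One-step bound. -/
lemma step_bound {k t : ℕ} (M : Kernel 𝒳 𝒳) [IsMarkovKernel M] (G : 𝒳 → ℝ)
    (hG : ∀ x, 0 < G x) (z : 𝒳)
    (p : (Fin (t + 1) → Fin (k + 2) → 𝒳) × (Fin t → Fin (k + 2) → Fin (k + 2)))
    (V : 𝒳 → ℝ≥0∞) (C : ℝ≥0∞) (hVm : Measurable V) (hV0 : ∀ x, V x ≠ 0) (hVC : ∀ x, V x ≤ C)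
    (hC0 : C ≠ 0) (hC : C ≠ ⊤) (hlow : ∀ x', C⁻¹ ≤ ∫⁻ x, V x ∂(M x'))
    (h : (Fin (t + 2) → 𝒳) → ℝ≥0∞) (hh : Measurable h)
    (hhV : ∀ y, h y ≤ V (y (Fin.last (t + 1)))) :
    alphaStep C k *
      ((∑ n, ENNReal.ofReal (G (p.1 (Fin.last t) n)) *
          ∫⁻ x, h (Fin.snoc (traj p.1 p.2 n) x : Fin (t + 2) → 𝒳) ∂(M (p.1 (Fin.last t) n))) *
        (∑ n, ENNReal.ofReal (G (p.1 (Fin.last t) n)) * ∫⁻ x, V x ∂(M (p.1 (Fin.last t) n)))⁻¹)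
      ≤ ∫⁻ q, (∑ n, h (traj q.1 q.2 n)) * (∑ n, V (q.1 (Fin.last (t + 1)) n))⁻¹
          ∂(stepLaw M G z p) := by
  have hprob := isProb_stepLaw M G hG z p
  have hsel := isProb_select G hG (p.1 (Fin.last t))
  have hanc : ∀ n : Fin (k + 2), IsProbabilityMeasure
    (if n = 0 then Measure.dirac (0 : Fin (k + 2)) else select G (p.1 (Fin.last t))) :=
    fun n => isProb_ite _ _
  have hmov : ∀ (a : Fin (k + 2) → Fin (k + 2)) (n : Fin (k + 2)), IsProbabilityMeasure
    (if n = 0 then Measure.dirac z else M (p.1 (Fin.last t) (a n))) := fun a n => isProb_ite _ _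
  set S := ∑ j, ENNReal.ofReal (G (p.1 (Fin.last t) j)) with hS
  have hS0 : S ≠ 0 := sumG_ne_zero G hG _
  have hSt : S ≠ ⊤ := sumG_ne_top G _
  set qh : Fin (k + 2) → ℝ≥0∞ := fun n =>
    ∫⁻ x, h (Fin.snoc (traj p.1 p.2 n) x : Fin (t + 2) → 𝒳) ∂(M (p.1 (Fin.last t) n)) with hqh
  set qv : Fin (k + 2) → ℝ≥0∞ := fun n => ∫⁻ x, V x ∂(M (p.1 (Fin.last t) n)) with hqv
  have hsn : ∀ n, Measurable fun x => h (Fin.snoc (traj p.1 p.2 n) x : Fin (t + 2) → 𝒳) :=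
    fun n => hh.comp (measurable_snoc_fix.comp (measurable_prodMk_left (x := traj p.1 p.2 n)))
  have hqhC : ∀ n, qh n ≤ C := fun n => lintegral_le_of_le _ _ _ fun x =>
    (hhV _).trans (hVC _)
  have hqvC : ∀ n, qv n ≤ C := fun n => lintegral_le_of_le _ _ _ hVC
  have e1 : ∫⁻ n, qh n ∂(select G (p.1 (Fin.last t)))
      = (∑ n, ENNReal.ofReal (G (p.1 (Fin.last t) n)) * qh n) * S⁻¹ := lintegral_select G hG _ _
  have e2 : ∫⁻ n, qv n ∂(select G (p.1 (Fin.last t)))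
      = (∑ n, ENNReal.ofReal (G (p.1 (Fin.last t) n)) * qv n) * S⁻¹ := lintegral_select G hG _ _
  have hηv : (∑ n, ENNReal.ofReal (G (p.1 (Fin.last t) n)) * qh n) *
        (∑ n, ENNReal.ofReal (G (p.1 (Fin.last t) n)) * qv n)⁻¹ =
      (∫⁻ n, qh n ∂(select G (p.1 (Fin.last t)))) *
        (∫⁻ n, qv n ∂(select G (p.1 (Fin.last t))))⁻¹ := by
    rw [e1, e2, ENNReal.mul_inv (Or.inr (ENNReal.inv_ne_top.2 hS0))
      (Or.inr (ENNReal.inv_ne_zero.2 hSt)), inv_inv, mul_mul_mul_comm,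
      mul_comm S⁻¹ _]
    rw [mul_comm S S⁻¹, ENNReal.inv_mul_cancel hS0 hSt, mul_one]
  rw [hηv]
  refine ratio_bound' (stepLaw M G z p) k (fun n q => h (traj q.1 q.2 n))
    (fun n q => V (q.1 (Fin.last (t + 1)) n)) (fun n => hh.comp (measurable_traj n))
    (fun n => by fun_prop) C _ _ hC0 hC
    (ne_top_of_le_ne_top hC (lintegral_le_of_le _ _ _ hqhC))
    (ne_top_of_le_ne_top hC (lintegral_le_of_le _ _ _ hqvC)) ?_ (fun n q => hVC _)
    (fun n q => hV0 _) ?_ ?_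
  · calc C⁻¹ = ∫⁻ n, C⁻¹ ∂(select G (p.1 (Fin.last t))) := by simp
      _ ≤ _ := lintegral_mono fun n => hlow _
  · intro i
    rw [lintegral_stepLaw _ _ _ _ (fun q => h (traj q.1 q.2 i.succ)) (hh.comp (measurable_traj _))]
    simp_rw [traj_snoc]
    have : ∀ a : Fin (k + 2) → Fin (k + 2),
        ∫⁻ xnew, h (Fin.snoc (traj p.1 p.2 (a i.succ)) (xnew i.succ) : Fin (t + 2) → 𝒳)
          ∂(moveLaw M z (p.1 (Fin.last t)) a) = qh (a i.succ) := by
      intro a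
      rw [moveLaw, lintegral_pi_single (X := fun _ => 𝒳) _ i.succ
        (fun x => h (Fin.snoc (traj p.1 p.2 (a i.succ)) x : Fin (t + 2) → 𝒳)) (hsn _)]
      simp [Fin.succ_ne_zero, hqh]
    simp_rw [this]
    rw [ancLaw, lintegral_pi_single (X := fun _ => Fin (k + 2)) _ i.succ qh (measurable_of_finite _)]
    simp [Fin.succ_ne_zero]
  · intro i j hij
    have hij' : i.succ ≠ j.succ := fun hc => hij (Fin.succ_injective _ hc)
    apply le_of_eq
    rw [lintegral_stepLaw _ _ _ _
      (fun q => h (traj q.1 q.2 i.succ) * V (q.1 (Fin.last (t + 1)) j.succ))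
      ((hh.comp (measurable_traj i.succ)).mul (by fun_prop))]
    simp_rw [traj_snoc, Fin.snoc_last]
    have : ∀ a : Fin (k + 2) → Fin (k + 2),
        ∫⁻ xnew, h (Fin.snoc (traj p.1 p.2 (a i.succ)) (xnew i.succ) : Fin (t + 2) → 𝒳) *
          V (xnew j.succ)
          ∂(moveLaw M z (p.1 (Fin.last t)) a) = qh (a i.succ) * qv (a j.succ) := by
      intro a
      rw [moveLaw, lintegral_pi_pair (X := fun _ => 𝒳) _ i.succ j.succ hij'
        (fun x => h (Fin.snoc (traj p.1 p.2 (a i.succ)) x : Fin (t + 2) → 𝒳)) V (hsn _) hVm]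
      simp [Fin.succ_ne_zero, hqh, hqv]
    simp_rw [this]
    rw [ancLaw, lintegral_pi_pair (X := fun _ => Fin (k + 2)) _ i.succ j.succ hij' qh qv (measurable_of_finite _)
      (measurable_of_finite _)]
    simp [Fin.succ_ne_zero]

lemma main_bound (m0 : Measure 𝒳) [IsProbabilityMeasure m0] (m : ℕ → Kernel 𝒳 𝒳)
    (hm : ∀ t, IsMarkovKernel (m t)) (G : ℕ → 𝒳 → ℝ) (hGm : ∀ t, Measurable (G t))
    (hG : ∀ t x, 0 < G t x) (g : ℕ → ℝ≥0∞) (hg0 : ∀ t, g t ≠ 0) (hgt : ∀ t, g t ≠ ⊤)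
    (hGg : ∀ t x, ENNReal.ofReal (G t x) ≤ g t)
    (hGlow : ∀ t, lowOK m0 m t (fun x => ENNReal.ofReal (G t x)) (g t)) (t : ℕ) :
    ∀ (V : 𝒳 → ℝ≥0∞) (C : ℝ≥0∞), Measurable V → (∀ x, V x ≠ 0) → (∀ x, V x ≤ C) →
      C ≠ 0 → C ≠ ⊤ → lowOK m0 m t V C →
      (Gam m0 m G t (fun y => V (y (Fin.last t))) ≠ 0 ∧
        Gam m0 m G t (fun y => V (y (Fin.last t))) ≠ ⊤) ∧
      ∃ α : ℕ → ℝ≥0∞, Tendsto α atTop (𝓝 1) ∧ ∀ (k : ℕ) (z : ℕ → 𝒳)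
        (h : (Fin (t + 1) → 𝒳) → ℝ≥0∞), Measurable h → (∀ y, h y ≤ V (y (Fin.last t))) →
        α k * (Gam m0 m G t h * (Gam m0 m G t (fun y => V (y (Fin.last t))))⁻¹)
          ≤ ∫⁻ p, (∑ n, h (traj p.1 p.2 n)) * (∑ n, V (p.1 (Fin.last t) n))⁻¹
            ∂(cpfSystem (k + 2) m0 m (fun t => multinomialR (G t)) z (fun _ => 0) t) := by
  induction t with
  | zero =>
    intro V C hVm hV0 hVC hC0 hC hlow
    simp only [Gam]
    have hle : ∫⁻ x, V x ∂m0 ≤ C := lintegral_le_of_le _ _ _ hVC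
    refine ⟨⟨?_, ne_top_of_le_ne_top hC hle⟩, alphaStep C, tendsto_alphaStep C hC0 hC, ?_⟩
    · intro h0
      simp only [lowOK, h0] at hlow
      simp [hC] at hlow
    · intro k z h hh hhV
      have h_initprob := isProb_initLaw (k := k) m0 (z 0)
      have hp : ∀ n : Fin (k + 2), IsProbabilityMeasure
        (if n = 0 then Measure.dirac (z 0) else m0) := fun n => isProb_ite _ _
      have hsys : cpfSystem (k + 2) m0 m (fun t => multinomialR (G t)) z (fun _ => 0) 0
        = (initLaw m0 (z 0)).map fun x0 => (fun _ => x0, fun j => j.elim0) := rfl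
      have htraj : ∀ (x0 : Fin (k + 2) → 𝒳) (n : Fin (k + 2)),
          traj (fun _ : Fin (0 + 1) => x0) (fun j : Fin 0 => j.elim0) n = fun _ => x0 n := by
        intro x0 n
        funext s
        simp [traj, lineage, ancAux]
      have hconst : Measurable fun x : 𝒳 => h (fun _ => x) :=
        hh.comp (measurable_pi_lambda _ fun _ => measurable_id)
      rw [hsys, lintegral_map _ measurable_initMap]
      · simp_rw [htraj]
        refine ratio_bound' (initLaw m0 (z 0)) k (fun n x0 => h (fun _ => x0 n))
          (fun n x0 => V (x0 n)) (fun n => hconst.comp (measurable_pi_apply n))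
          (fun n => by fun_prop) C _ _ hC0 hC
          (ne_top_of_le_ne_top hC (lintegral_le_of_le _ _ _ fun x => (hhV _).trans (hVC _)))
          (ne_top_of_le_ne_top hC hle) hlow (fun n q => hVC _) (fun n q => hV0 _) ?_ ?_
        · intro i
          rw [initLaw, lintegral_pi_single (X := fun _ => 𝒳) _ i.succ
            (fun x : 𝒳 => h (fun _ => x)) hconst]
          simp [Fin.succ_ne_zero]
        · intro i j hij
          have hij' : i.succ ≠ j.succ := fun hc => hij (Fin.succ_injective _ hc)
          apply le_of_eq
          rw [initLaw, lintegral_pi_pair (X := fun _ => 𝒳) _ i.succ j.succ hij'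
            (fun x : 𝒳 => h (fun _ => x)) V
            hconst hVm]
          simp [Fin.succ_ne_zero]
      · refine Measurable.mul (Finset.measurable_sum _ fun n _ => hh.comp (measurable_traj n)) ?_
        fun_prop
  | succ t ih =>
    intro V C hVm hV0 hVC hC0 hC hlow
    have hM := hm (t + 1)
    have hqVm : Measurable fun x => ∫⁻ y, V y ∂(m (t + 1) x) := hVm.lintegral_kernel
    have hCinv : C⁻¹ ≠ 0 := ENNReal.inv_ne_zero.2 hC
    have hprod : ∀ μ : Measure 𝒳, (g t)⁻¹ ≤ ∫⁻ x, ENNReal.ofReal (G t x) ∂μ →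
        (g t * C)⁻¹ ≤ ∫⁻ x, ENNReal.ofReal (G t x) * ∫⁻ y, V y ∂(m (t + 1) x) ∂μ := by
      intro μ hμ
      calc (g t * C)⁻¹ = (g t)⁻¹ * C⁻¹ := ENNReal.mul_inv (Or.inr hC) (Or.inr hC0)
        _ ≤ (∫⁻ x, ENNReal.ofReal (G t x) ∂μ) * C⁻¹ := by gcongr
        _ = ∫⁻ x, ENNReal.ofReal (G t x) * C⁻¹ ∂μ := by
            rw [lintegral_mul_const _ (hGm t).ennreal_ofReal]
        _ ≤ _ := lintegral_mono fun x => by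
            simp only
            gcongr
            exact hlow x
    obtain ⟨hΓ, α, hα, hb⟩ := ih
      (fun x => ENNReal.ofReal (G t x) * ∫⁻ y, V y ∂(m (t + 1) x)) (g t * C)
      ((hGm t).ennreal_ofReal.mul hqVm)
      (fun x => mul_ne_zero (by simpa using hG t x)
        (fun h0 => by
          have := hlow x
          rw [h0] at this
          exact hCinv (le_antisymm this bot_le)))
      (fun x => mul_le_mul' (hGg t x) (lintegral_le_of_le _ _ _ hVC))
      (mul_ne_zero (hg0 t) hC0) (ENNReal.mul_ne_top (hgt t) hC)
      (by
        have := hGlow t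
        cases t with
        | zero => exact hprod _ this
        | succ t => exact fun x' => hprod _ (this x'))
    have hΓeq : Gam m0 m G (t + 1) (fun y => V (y (Fin.last (t + 1))))
        = Gam m0 m G t (fun y => ENNReal.ofReal (G t (y (Fin.last t))) *
            ∫⁻ x, V x ∂(m (t + 1) (y (Fin.last t)))) := by
      simp only [Gam, Fin.snoc_last]
    rw [hΓeq]
    refine ⟨hΓ, fun k => alphaStep C k * α k, ?_, ?_⟩
    · have := ENNReal.Tendsto.mul (tendsto_alphaStep C hC0 hC) (Or.inr ENNReal.one_ne_top) hα
        (Or.inr ENNReal.one_ne_top)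
      simpa using this
    · intro k z h hh hhV
      have hstep := hb k z _ (measurable_back (m (t + 1)) (G t) (hGm t) h hh) (fun y => by
        gcongr with x
        refine (hhV _).trans_eq ?_
        simp)
      rw [cpfSystem_succ m0 m G hG, Measure.lintegral_bind
        (measurable_stepLaw _ _ (hGm t) (hG t) _).aemeasurable]
      · refine le_trans ?_ (lintegral_mono fun p => step_bound (m (t + 1)) (G t) (hG t) (z (t + 1)) p
          V C hVm hV0 hVC hC0 hC hlow h hh hhV)
        simp_rw [traj_last] at hstep
        rw [lintegral_const_mul' _ _ ?_, mul_assoc]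
        · gcongr
          exact hstep
        · rw [alphaStep]
          refine ENNReal.mul_ne_top (by simp) (ENNReal.inv_ne_top.2 ?_)
          simp [hC0]
      · refine Measurable.aemeasurable (Measurable.mul
          (Finset.measurable_sum _ fun n _ => hh.comp (measurable_traj n)) ?_)
        fun_prop

end ParticleGibbs

end

section

open MeasureTheory ProbabilityTheory Filter
open scoped ENNReal Topology

namespace ParticleGibbs

set_option linter.unusedSectionVars false

variable {𝒳 : Type*} [MeasurableSpace 𝒳]

lemma cpfKernel_eq {k T : ℕ} (m0 : Measure 𝒳) (m : ℕ → Kernel 𝒳 𝒳) (G : ℕ → 𝒳 → ℝ)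
    (x : Fin (T + 1) → 𝒳) :
    cpfKernel (k + 2) m0 m G (fun t => multinomialR (G t)) T x =
      (cpfSystem (k + 2) m0 m (fun t => multinomialR (G t)) (extendPath x) (fun _ => 0) T).bind
        fun p => (select (G T) (p.1 (Fin.last T))).bind fun n => Measure.dirac (traj p.1 p.2 n) := by
  rw [cpfKernel, dif_pos (by omega)]
  rfl

lemma measurable_finalKernel {k T : ℕ} (G : 𝒳 → ℝ) (hGm : Measurable G) :
    Measurable fun p : (Fin (T + 1) → Fin (k + 2) → 𝒳) × (Fin T → Fin (k + 2) → Fin (k + 2)) =>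
      (select G (p.1 (Fin.last T))).bind fun n => Measure.dirac (traj p.1 p.2 n) := by
  refine measurable_bind_finite _ ?_ _ fun n => ?_
  · exact (measurable_select G hGm).comp ((measurable_pi_apply _).comp measurable_fst)
  · exact Measure.measurable_dirac.comp (measurable_traj n)

lemma lintegral_cpfKernel {k T : ℕ} (m0 : Measure 𝒳) (m : ℕ → Kernel 𝒳 𝒳) (G : ℕ → 𝒳 → ℝ)
    (hGm : ∀ t, Measurable (G t)) (hG : ∀ t x, 0 < G t x)
    (x : Fin (T + 1) → 𝒳) (f : (Fin (T + 1) → 𝒳) → ℝ≥0∞) (hf : Measurable f) :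
    ∫⁻ z, f z ∂(cpfKernel (k + 2) m0 m G (fun t => multinomialR (G t)) T x) =
      ∫⁻ p, (∑ n, ENNReal.ofReal (G T (traj p.1 p.2 n (Fin.last T))) * f (traj p.1 p.2 n)) *
          (∑ n, ENNReal.ofReal (G T (p.1 (Fin.last T) n)))⁻¹
        ∂(cpfSystem (k + 2) m0 m (fun t => multinomialR (G t)) (extendPath x) (fun _ => 0) T) := by
  rw [cpfKernel_eq, Measure.lintegral_bind (measurable_finalKernel (G T) (hGm T)).aemeasurable
    hf.aemeasurable]
  refine lintegral_congr fun p => ?_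
  rw [Measure.lintegral_bind (measurable_of_finite _).aemeasurable hf.aemeasurable]
  simp_rw [lintegral_dirac' _ hf, traj_last]
  exact lintegral_select (G T) (hG T) _ _

lemma isProb_cpfKernel {k T : ℕ} (m0 : Measure 𝒳) [IsProbabilityMeasure m0] (m : ℕ → Kernel 𝒳 𝒳)
    (hm : ∀ t, IsMarkovKernel (m t)) (G : ℕ → 𝒳 → ℝ)
    (hGm : ∀ t, Measurable (G t)) (hG : ∀ t x, 0 < G t x) (x : Fin (T + 1) → 𝒳) :
    IsProbabilityMeasure (cpfKernel (k + 2) m0 m G (fun t => multinomialR (G t)) T x) := by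
  constructor
  have hs := isProb_cpfSystem (k := k) m0 m hm G hGm hG (extendPath x) T
  have h := lintegral_cpfKernel (k := k) m0 m G hGm hG x (fun _ => 1) measurable_const
  simp only [lintegral_one, mul_one, traj_last] at h
  rw [h]
  simp_rw [fun p : (Fin (T + 1) → Fin (k + 2) → 𝒳) × (Fin T → Fin (k + 2) → Fin (k + 2)) =>
    ENNReal.mul_inv_cancel (sumG_ne_zero (G T) (hG T) (p.1 (Fin.last T)))
      (sumG_ne_top (G T) (p.1 (Fin.last T)))]
  simp

/-- The uniform minorisation of the conditional particle filter kernel. -/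
lemma cpf_minorisation (T : ℕ) (m0 : Measure 𝒳) [IsProbabilityMeasure m0] (m : ℕ → Kernel 𝒳 𝒳)
    (hm : ∀ t, IsMarkovKernel (m t)) (G : ℕ → 𝒳 → ℝ) (hGm : ∀ t, Measurable (G t))
    (hG : ∀ t x, 0 < G t x) (g : ℕ → ℝ≥0∞) (hg0 : ∀ t, g t ≠ 0) (hgt : ∀ t, g t ≠ ⊤)
    (hGg : ∀ t x, ENNReal.ofReal (G t x) ≤ g t)
    (hGlow : ∀ t, lowOK m0 m t (fun x => ENNReal.ofReal (G t x)) (g t)) :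
    ∃ α : ℕ → ℝ≥0∞, Tendsto α atTop (𝓝 1) ∧
      ∀ f1 f2 : (Fin (T + 1) → 𝒳) → ℝ≥0∞, Measurable f1 → Measurable f2 →
        (∀ y, f1 y + f2 y = 1) → ∃ r1 r2 : ℝ≥0∞, r1 + r2 = 1 ∧ ∀ k (x : Fin (T + 1) → 𝒳),
          α k * r1 ≤ ∫⁻ z, f1 z ∂(cpfKernel (k + 2) m0 m G (fun t => multinomialR (G t)) T x) ∧
          α k * r2 ≤ ∫⁻ z, f2 z ∂(cpfKernel (k + 2) m0 m G (fun t => multinomialR (G t)) T x) := by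
  obtain ⟨⟨hZ0, hZt⟩, α, hα, hb⟩ := main_bound m0 m hm G hGm hG g hg0 hgt hGg hGlow T
    (fun x => ENNReal.ofReal (G T x)) (g T) (hGm T).ennreal_ofReal
    (fun x => by simpa using hG T x) (hGg T) (hg0 T) (hgt T) (hGlow T)
  refine ⟨α, hα, fun f1 f2 hf1 hf2 h12 => ?_⟩
  have hGl : Measurable fun y : Fin (T + 1) → 𝒳 => ENNReal.ofReal (G T (y (Fin.last T))) :=
    ((hGm T).comp (measurable_pi_apply _)).ennreal_ofReal
  have hle : ∀ f : (Fin (T + 1) → 𝒳) → ℝ≥0∞, (∀ y, f y ≤ 1) → ∀ y,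
      ENNReal.ofReal (G T (y (Fin.last T))) * f y ≤ ENNReal.ofReal (G T (y (Fin.last T))) :=
    fun f hf y => by
      calc _ ≤ ENNReal.ofReal (G T (y (Fin.last T))) * 1 := by gcongr; exact hf y
        _ = _ := mul_one _
  set Z := Gam m0 m G T (fun y => ENNReal.ofReal (G T (y (Fin.last T)))) with hZ
  refine ⟨Gam m0 m G T (fun y => ENNReal.ofReal (G T (y (Fin.last T))) * f1 y) * Z⁻¹,
    Gam m0 m G T (fun y => ENNReal.ofReal (G T (y (Fin.last T))) * f2 y) * Z⁻¹, ?_, ?_⟩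
  · rw [← add_mul, ← Gam_add m0 m hm G hGm T
      (fun y => ENNReal.ofReal (G T (y (Fin.last T))) * f1 y)
      (fun y => ENNReal.ofReal (G T (y (Fin.last T))) * f2 y) (hGl.mul hf1) (hGl.mul hf2)]
    simp_rw [← mul_add, h12, mul_one]
    exact ENNReal.mul_inv_cancel hZ0 hZt
  · intro k x
    rw [lintegral_cpfKernel m0 m G hGm hG x f1 hf1, lintegral_cpfKernel m0 m G hGm hG x f2 hf2]
    exact ⟨hb k (extendPath x) (fun y => ENNReal.ofReal (G T (y (Fin.last T))) * f1 y)
        (hGl.mul hf1) (hle f1 fun y => h12 y ▸ le_self_add),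
      hb k (extendPath x) (fun y => ENNReal.ofReal (G T (y (Fin.last T))) * f2 y)
        (hGl.mul hf2) (hle f2 fun y => h12 y ▸ le_add_self)⟩

lemma inv_le_lintegral (μ : Measure 𝒳) [IsProbabilityMeasure μ] (G : 𝒳 → ℝ) (hGm : Measurable G)
    (hG : ∀ x, 0 < G x) (g : ℝ) (hg : 0 < g) (hGg : ∀ x, G x ≤ g) (h : g⁻¹ ≤ ∫ x, G x ∂μ) :
    (ENNReal.ofReal g)⁻¹ ≤ ∫⁻ x, ENNReal.ofReal (G x) ∂μ := by
  have h_integ : Integrable G μ := Integrable.of_bound hGm.aestronglyMeasurable g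
    (Eventually.of_forall fun x => by
      rw [Real.norm_eq_abs, abs_of_pos (hG x)]; exact hGg x)
  rw [← ofReal_integral_eq_lintegral_ofReal h_integ (Eventually.of_forall fun x => (hG x).le),
    ← ENNReal.ofReal_inv_of_pos hg]
  exact ENNReal.ofReal_le_ofReal h

theorem cpf_close_aux
    (T : ℕ) (m0 : Measure 𝒳) (hm0 : IsProbabilityMeasure m0)
    (m : ℕ → Kernel 𝒳 𝒳) (hm : ∀ t, IsMarkovKernel (m t))
    (G : ℕ → 𝒳 → ℝ) (hGmeas : ∀ t, Measurable (G t))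
    (hGpos : ∀ t x, 0 < G t x)
    (g : ℕ → ℝ) (hg : ∀ t, 0 < g t) (hGle : ∀ t x, G t x ≤ g t)
    (hg0 : (g 0)⁻¹ ≤ ∫ x, G 0 x ∂m0)
    (hgt : ∀ t, 0 < t → ∀ x', (g t)⁻¹ ≤ ∫ x, G t x ∂((m t) x'))
    (ε : ℝ) (hε : ε ∈ Set.Ioo (0 : ℝ) 1) :
    ∃ N0 : ℕ, 1 ≤ N0 ∧ ∀ N, N0 ≤ N →
      ∀ (x xc : Fin (T + 1) → 𝒳) (φ : (Fin (T + 1) → 𝒳) → ℝ),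
        Measurable φ → (∀ z, |φ z| ≤ 1) →
        |(∫ z, φ z ∂(cpfKernel N m0 m G (fun t => multinomialR (G t)) T x)) -
            ∫ z, φ z ∂(cpfKernel N m0 m G (fun t => multinomialR (G t)) T xc)| ≤ ε := by
  have hlow : ∀ t, lowOK m0 m t (fun x => ENNReal.ofReal (G t x)) (ENNReal.ofReal (g t)) := by
    intro t
    cases t with
    | zero => exact inv_le_lintegral m0 _ (hGmeas 0) (hGpos 0) _ (hg 0) (hGle 0) hg0
    | succ t =>
      intro x'
      have := hm (t + 1)
      exact inv_le_lintegral _ _ (hGmeas _) (hGpos _) _ (hg _) (hGle _) (hgt _ (by omega) x')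
  obtain ⟨α, hα, hmin⟩ := cpf_minorisation T m0 m hm G hGmeas hGpos
    (fun t => ENNReal.ofReal (g t)) (fun t => by simpa using hg t) (fun t => ENNReal.ofReal_ne_top)
    (fun t x => ENNReal.ofReal_le_ofReal (hGle t x)) hlow
  have hα2 : Tendsto (fun k => (α k).toReal) atTop (𝓝 1) := by
    simpa [Function.comp_def] using (ENNReal.tendsto_toReal ENNReal.one_ne_top).comp hα
  obtain ⟨k0, hk0⟩ := eventually_atTop.1
    (hα2.eventually (lt_mem_nhds (show 1 - ε / 2 < 1 by linarith [hε.1])))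
  refine ⟨k0 + 2, by omega, fun N hN x xc φ hφ hφ1 => ?_⟩
  obtain ⟨k, rfl⟩ : ∃ k, N = k + 2 := ⟨N - 2, by omega⟩
  have hαk := hk0 k (by omega)
  have hlo : ∀ z, -1 ≤ φ z := fun z => (abs_le.1 (hφ1 z)).1
  have hhi : ∀ z, φ z ≤ 1 := fun z => (abs_le.1 (hφ1 z)).2
  obtain ⟨r1, r2, hr, hb⟩ := hmin (fun z => ENNReal.ofReal ((1 + φ z) / 2))
    (fun z => ENNReal.ofReal ((1 - φ z) / 2)) (by fun_prop) (by fun_prop) (fun z => by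
      rw [← ENNReal.ofReal_add (by linarith [hlo z]) (by linarith [hhi z])]
      ring_nf; simp)
  have hr1 : r1 ≠ ⊤ := ne_top_of_le_ne_top ENNReal.one_ne_top (hr ▸ le_self_add)
  have hr2 : r2 ≠ ⊤ := ne_top_of_le_ne_top ENNReal.one_ne_top (hr ▸ le_add_self)
  have hrr : r1.toReal + r2.toReal = 1 := by
    rw [← ENNReal.toReal_add hr1 hr2, hr]; simp
  have key : ∀ y : Fin (T + 1) → 𝒳,
      (α k).toReal * r1.toReal ≤
        (1 + ∫ z, φ z ∂(cpfKernel (k + 2) m0 m G (fun t => multinomialR (G t)) T y)) / 2 ∧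
      (α k).toReal * r2.toReal ≤
        (1 - ∫ z, φ z ∂(cpfKernel (k + 2) m0 m G (fun t => multinomialR (G t)) T y)) / 2 := by
    intro y
    have hP := isProb_cpfKernel (k := k) m0 m hm G hGmeas hGpos y
    obtain ⟨b1, b2⟩ := hb k y
    set P := cpfKernel (k + 2) m0 m G (fun t => multinomialR (G t)) T y
    have h_integ : Integrable φ P := Integrable.of_bound hφ.aestronglyMeasurable 1
      (Eventually.of_forall fun z => hφ1 z)
    have hi1 : Integrable (fun z => (1 + φ z) / 2) P := ((integrable_const 1).add h_integ).div_const 2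
    have hi2 : Integrable (fun z => (1 - φ z) / 2) P := ((integrable_const 1).sub h_integ).div_const 2
    have e1 : ∫ z, (1 + φ z) / 2 ∂P = (1 + ∫ z, φ z ∂P) / 2 := by
      rw [integral_div, integral_add (integrable_const 1) h_integ]; simp
    have e2 : ∫ z, (1 - φ z) / 2 ∂P = (1 - ∫ z, φ z ∂P) / 2 := by
      rw [integral_div, integral_sub (integrable_const 1) h_integ]; simp
    rw [← ofReal_integral_eq_lintegral_ofReal hi1
      (Eventually.of_forall fun z => by have := hlo z; simp only [Pi.zero_apply]; linarith), e1] at b1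
    rw [← ofReal_integral_eq_lintegral_ofReal hi2
      (Eventually.of_forall fun z => by have := hhi z; simp only [Pi.zero_apply]; linarith), e2] at b2
    have p1 : 0 ≤ (1 + ∫ z, φ z ∂P) / 2 := by
      rw [← e1]; exact integral_nonneg fun z => by have := hlo z; simp only [Pi.zero_apply]; linarith
    have p2 : 0 ≤ (1 - ∫ z, φ z ∂P) / 2 := by
      rw [← e2]; exact integral_nonneg fun z => by have := hhi z; simp only [Pi.zero_apply]; linarith
    constructor
    · have := ENNReal.toReal_mono ENNReal.ofReal_ne_top b1
      rwa [ENNReal.toReal_mul, ENNReal.toReal_ofReal p1] at this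
    · have := ENNReal.toReal_mono ENNReal.ofReal_ne_top b2
      rwa [ENNReal.toReal_mul, ENNReal.toReal_ofReal p2] at this
  obtain ⟨a1, a2⟩ := key x
  obtain ⟨c1, c2⟩ := key xc
  have hsum : (α k).toReal * r1.toReal + (α k).toReal * r2.toReal = (α k).toReal := by
    rw [← mul_add, hrr, mul_one]
  rw [abs_le]
  constructor <;> linarith

end ParticleGibbs

end

namespace ParticleGibbs

variable {𝒳 : Type*} [MetricSpace 𝒳] [CompleteSpace 𝒳] [TopologicalSpace.SeparableSpace 𝒳]
  [MeasurableSpace 𝒳] [BorelSpace 𝒳]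

/-- Under Assumptions (G) and (MR): for any `ε ∈ (0,1)` and `T ≥ 1` there exists `N₀`
such that for all `N ≥ N₀`, all starting trajectories and all `φ : 𝒳^{T+1} → [-1,1]`,
`|P_T^N(φ)(x_{0:T}) - P_T^N(φ)(x̌_{0:T})| ≤ ε`. -/
theorem cpf_kernel_uniform_closeness
    (T : ℕ) (hT : 1 ≤ T)
    (m0 : Measure 𝒳) (hm0 : IsProbabilityMeasure m0)
    (m : ℕ → Kernel 𝒳 𝒳) (hm : ∀ t, IsMarkovKernel (m t))
    (G : ℕ → 𝒳 → ℝ) (hGmeas : ∀ t, Measurable (G t))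
    (hGpos : ∀ t x, 0 < G t x)
    (g : ℕ → ℝ) (hg : ∀ t, 0 < g t) (hGle : ∀ t x, G t x ≤ g t)
    (hg0 : (g 0)⁻¹ ≤ ∫ x, G 0 x ∂m0)
    (hgt : ∀ t, 0 < t → ∀ x', (g t)⁻¹ ≤ ∫ x, G t x ∂((m t) x'))
    (ε : ℝ) (hε : ε ∈ Set.Ioo (0 : ℝ) 1) :
    ∃ N0 : ℕ, 1 ≤ N0 ∧ ∀ N, N0 ≤ N →
      ∀ (x xc : Fin (T + 1) → 𝒳) (φ : (Fin (T + 1) → 𝒳) → ℝ),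
        Measurable φ → (∀ z, |φ z| ≤ 1) →
        |(∫ z, φ z ∂(cpfKernel N m0 m G (fun t => multinomialR (G t)) T x)) -
            ∫ z, φ z ∂(cpfKernel N m0 m G (fun t => multinomialR (G t)) T xc)| ≤ ε := by
  exact cpf_close_aux T m0 hm0 m hm G hGmeas hGpos g hg hGle hg0 hgt ε hε

end ParticleGibbs
end

section
/- Under Assumptions (G) and (MR), for any δ ∈ (0,1) and T ∈ ℕ⁺, there exist positive integers N_0, L_1, …, L_T such that for any N ≥ N_0 and any frozen trajectories x_{0:T}, x̌_{0:T} ∈ 𝒳^{T+1}, the coupled conditional particle systems satisfy ∑_{k_1=1}^{L_1} ⋯ ∑_{k_T=1}^{L_T} ℙ(|C_1| = N−k_1, …, |C_T| = N−k_T) ≥ (1−δ)^{3T}, where C_t is the set of coupled particle labels at time t. -/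
open MeasureTheory ProbabilityTheory Filter
open scoped ENNReal Topology

namespace ParticleGibbs

section Helpers

variable {𝒳 : Type*} [MeasurableSpace 𝒳]

/-- The good event at one time. -/
def Good (N : ℕ) (G : 𝒳 → ℝ) (L : ℕ) (c : ℝ) (s : Fin N → 𝒳 × 𝒳 × Bool) : Prop :=
  (∀ n : Fin N, (n : ℕ) = 0 → (s n).2.2 = false) ∧
  (Finset.univ.filter fun n : Fin N => (s n).2.2 = false).card ≤ L ∧
  c * N ≤ ∑ j, if (s j).2.2 then G (s j).1 else 0

lemma measurable_flagSum {N : ℕ} (G : 𝒳 → ℝ) (hG : Measurable G) :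
    Measurable fun s : Fin N → 𝒳 × 𝒳 × Bool => ∑ j, if (s j).2.2 then G (s j).1 else 0 := by
  refine Finset.measurable_sum _ fun j _ => Measurable.ite ?_ (by fun_prop) measurable_const
  exact measurableSet_eq_fun (by fun_prop) measurable_const

lemma measurableSet_good (N : ℕ) (G : 𝒳 → ℝ) (hG : Measurable G) (L : ℕ) (c : ℝ) :
    MeasurableSet {s | Good N G L c s} := by
  unfold Good
  refine MeasurableSet.inter ?_ (MeasurableSet.inter ?_ ?_)
  · have : {s : Fin N → 𝒳 × 𝒳 × Bool | ∀ n : Fin N, (n : ℕ) = 0 → (s n).2.2 = false} =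
        ⋂ n : Fin N, {s | (n : ℕ) = 0 → (s n).2.2 = false} := by ext; simp
    change MeasurableSet {s : Fin N → 𝒳 × 𝒳 × Bool | ∀ n : Fin N, (n : ℕ) = 0 → (s n).2.2 = false}
    rw [this]
    refine MeasurableSet.iInter fun n => ?_
    by_cases h : (n : ℕ) = 0
    · simp only [h, forall_const]
      exact measurableSet_eq_fun (by fun_prop) measurable_const
    · simp [h]
  · have : Measurable fun s : Fin N → 𝒳 × 𝒳 × Bool =>
        (Finset.univ.filter fun n : Fin N => (s n).2.2 = false).card := by
      simp only [Finset.card_filter]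
      refine Finset.measurable_sum _ fun j _ =>
        Measurable.ite ?_ measurable_const measurable_const
      exact measurableSet_eq_fun (by fun_prop) measurable_const
    exact measurableSet_le this measurable_const
  · exact measurableSet_le measurable_const (measurable_flagSum G hG)

lemma integral_exp_bound (mu : Measure 𝒳) [IsProbabilityMeasure mu]
    (G : 𝒳 → ℝ) (hG : Measurable G) (hpos : ∀ x, 0 < G x) (g : ℝ) (hg : 0 < g)
    (hle : ∀ x, G x ≤ g) (hGint : g⁻¹ ≤ ∫ x, G x ∂mu)
    (ν : Measure (𝒳 × 𝒳 × Bool)) [IsProbabilityMeasure ν] (p : ℝ) (hp : 1 / 2 ≤ p)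
    (hν : ENNReal.ofReal p • mu.map (fun y => (y, y, true)) ≤ ν) :
    ∫ q, Real.exp (-(if q.2.2 then G q.1 / g else 0)) ∂ν ≤ Real.exp (-(1 / (4 * g ^ 2))) := by
  set X : 𝒳 × 𝒳 × Bool → ℝ := fun q => if q.2.2 then G q.1 / g else 0 with hX
  have hXm : Measurable X := by
    refine Measurable.ite ?_ (by fun_prop) measurable_const
    exact measurableSet_eq_fun (by fun_prop) measurable_const
  have hX0 : ∀ q, 0 ≤ X q := by
    intro q; simp only [hX]; split_ifs
    · exact (div_pos (hpos _) hg).le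
    · exact le_rfl
  have hX1 : ∀ q, X q ≤ 1 := by
    intro q; simp only [hX]; split_ifs
    · exact (div_le_one hg).2 (hle _)
    · exact zero_le_one
  have hXi : Integrable X ν := by
    refine Integrable.of_bound hXm.aestronglyMeasurable 1 (Eventually.of_forall fun q => ?_)
    rw [Real.norm_eq_abs, abs_of_nonneg (hX0 q)]; exact hX1 q
  have hdiag : Measurable (fun y : 𝒳 => ((y, y, true) : 𝒳 × 𝒳 × Bool)) := by fun_prop
  have hEX : 1 / (2 * g ^ 2) ≤ ∫ q, X q ∂ν := by
    have h1 := integral_mono_measure hν (Eventually.of_forall hX0) hXi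
    rw [integral_smul_measure, integral_map hdiag.aemeasurable hXm.aestronglyMeasurable,
      ENNReal.toReal_ofReal (by linarith)] at h1
    simp only [hX, if_true, smul_eq_mul] at h1
    rw [integral_div] at h1
    refine le_trans ?_ h1
    have : 1 / (2 * g ^ 2) = (1 / 2) * (g⁻¹ / g) := by field_simp
    rw [this]
    gcongr
  have hexp : ∀ q, Real.exp (-(X q)) ≤ 1 - X q / 2 := by
    intro q
    have h0 := hX0 q
    have h1 := hX1 q
    have := Real.add_one_le_exp (X q)
    rw [Real.exp_neg]
    refine (inv_anti₀ (by linarith) this).trans ?_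
    rw [inv_le_iff_one_le_mul₀ (by linarith)]
    nlinarith
  calc ∫ q, Real.exp (-(X q)) ∂ν ≤ ∫ q, (1 - X q / 2) ∂ν := by
        refine integral_mono_of_nonneg (Eventually.of_forall fun q => (Real.exp_pos _).le) ?_
          (Eventually.of_forall hexp)
        exact (integrable_const _).sub (hXi.div_const 2)
    _ = 1 - (∫ q, X q ∂ν) / 2 := by
        rw [integral_sub (integrable_const _) (hXi.div_const 2), integral_div]; simp
    _ ≤ 1 - 1 / (4 * g ^ 2) := by
        have : 1 / (4 * g ^ 2) = (1 / (2 * g ^ 2)) / 2 := by field_simp; norm_num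
        rw [this]; linarith
    _ ≤ Real.exp (-(1 / (4 * g ^ 2))) := by
        have := Real.add_one_le_exp (-(1 / (4 * g ^ 2))); linarith

/-- Large deviation part. -/
lemma bad2_bound (M : ℕ) (G : 𝒳 → ℝ) (hG : Measurable G) (hpos : ∀ x, 0 < G x) (g : ℝ)
    (hg : 0 < g) (ν : Measure (𝒳 × 𝒳 × Bool)) [IsProbabilityMeasure ν] (b : ℝ)
    (hexp : ∫ q, Real.exp (-(if q.2.2 then G q.1 / g else 0)) ∂ν ≤ Real.exp (-b))
    (z : 𝒳 × 𝒳 × Bool) (c : ℝ) :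
    (Measure.pi fun n : Fin (M + 1) => if (n : ℕ) = 0 then Measure.dirac z else ν)
      {s | (∑ j, if (s j).2.2 then G (s j).1 else 0) < g * c} ≤
      ENNReal.ofReal (Real.exp (c - M * b)) := by
  set X : 𝒳 × 𝒳 × Bool → ℝ := fun q => if q.2.2 then G q.1 / g else 0 with hX
  have hXm : Measurable X := by
    refine Measurable.ite ?_ (by fun_prop) measurable_const
    exact measurableSet_eq_fun (by fun_prop) measurable_const
  have hX0 : ∀ q, 0 ≤ X q := by
    intro q; simp only [hX]; split_ifs
    · exact (div_pos (hpos _) hg).le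
    · exact le_rfl
  set μ : Fin (M + 1) → Measure (𝒳 × 𝒳 × Bool) :=
    fun n => if (n : ℕ) = 0 then Measure.dirac z else ν with hμ
  have : ∀ n, IsProbabilityMeasure (μ n) := by
    intro n; simp only [hμ]; split_ifs <;> infer_instance
  have hprod : ∫ s, ∏ n, Real.exp (-(X (s n))) ∂(Measure.pi μ) ≤ Real.exp (-(M * b)) := by
    rw [integral_fintype_prod_eq_prod (fun _ q => Real.exp (-(X q))) , Fin.prod_univ_succ]
    have h0 : ∫ q, Real.exp (-(X q)) ∂(μ 0) ≤ 1 := by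
      calc ∫ q, Real.exp (-(X q)) ∂(μ 0) ≤ ∫ q, (1 : ℝ) ∂(μ 0) := by
            refine integral_mono_of_nonneg (Eventually.of_forall fun q => (Real.exp_pos _).le)
              (integrable_const _) (Eventually.of_forall fun q => ?_)
            exact Real.exp_le_one_iff.2 (neg_nonpos.2 (hX0 q))
        _ = 1 := by simp
    have h1 : ∏ i : Fin M, ∫ q, Real.exp (-(X q)) ∂(μ i.succ) ≤ Real.exp (-(M * b)) := by
      calc ∏ i : Fin M, ∫ q, Real.exp (-(X q)) ∂(μ i.succ) ≤ ∏ i : Fin M, Real.exp (-b) := by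
            refine Finset.prod_le_prod (fun i _ => integral_nonneg fun q => (Real.exp_pos _).le)
              fun i _ => ?_
            simpa [hμ] using hexp
        _ = Real.exp (-(M * b)) := by
            rw [Finset.prod_const, ← Real.exp_nat_mul]; simp
    calc _ ≤ 1 * Real.exp (-(M * b)) := by
          refine mul_le_mul h0 h1 ?_ zero_le_one
          exact Finset.prod_nonneg fun i _ => integral_nonneg fun q => (Real.exp_pos _).le
      _ = _ := one_mul _
  have hmeas : Measurable fun s : Fin (M + 1) → 𝒳 × 𝒳 × Bool => ∏ n, Real.exp (-(X (s n))) := by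
    fun_prop
  have hmk := mul_meas_ge_le_integral_of_nonneg (μ := Measure.pi μ)
    (f := fun s : Fin (M + 1) → 𝒳 × 𝒳 × Bool => ∏ n, Real.exp (-(X (s n))))
    (Eventually.of_forall fun s => Finset.prod_nonneg fun i _ => (Real.exp_pos _).le)
    (by
      refine Integrable.of_bound hmeas.aestronglyMeasurable 1 (Eventually.of_forall fun s => ?_)
      rw [Real.norm_eq_abs, abs_of_nonneg (Finset.prod_nonneg fun i _ => (Real.exp_pos _).le)]
      exact Finset.prod_le_one (fun i _ => (Real.exp_pos _).le)
        fun i _ => Real.exp_le_one_iff.2 (neg_nonpos.2 (hX0 _))) (Real.exp (-c))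
  have hsub : {s : Fin (M + 1) → 𝒳 × 𝒳 × Bool |
      (∑ j, if (s j).2.2 then G (s j).1 else 0) < g * c} ⊆
      {s | Real.exp (-c) ≤ ∏ n, Real.exp (-(X (s n)))} := by
    intro s hs
    simp only [Set.mem_ofPred_eq] at hs ⊢
    rw [← Real.exp_sum, Real.exp_le_exp, Finset.sum_neg_distrib, neg_le_neg_iff]
    have : ∑ n, X (s n) = (∑ j, if (s j).2.2 then G (s j).1 else 0) / g := by
      rw [Finset.sum_div]
      refine Finset.sum_congr rfl fun j _ => ?_
      simp only [hX]; split_ifs <;> simp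
    rw [this, div_le_iff₀ hg]; linarith
  refine (measure_mono hsub).trans ?_
  rw [← ENNReal.ofReal_toReal (measure_ne_top (Measure.pi μ) _)]
  apply ENNReal.ofReal_le_ofReal
  have h2 := hmk.trans hprod
  have h3 : Real.exp (-c) = (Real.exp c)⁻¹ := Real.exp_neg c
  rw [Measure.real] at h2
  generalize ((Measure.pi μ) {s | Real.exp (-c) ≤ ∏ n, Real.exp (-X (s n))}).toReal = r at h2 ⊢
  rw [h3, inv_mul_le_iff₀ (Real.exp_pos _), ← Real.exp_add] at h2
  simpa [sub_eq_add_neg] using h2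

lemma bad1_bound (N : ℕ) (hN : 0 < N) (ν : Measure (𝒳 × 𝒳 × Bool)) [IsProbabilityMeasure ν]
    (K : ℝ) (hK : 0 ≤ K) (hν : ν {q | q.2.2 = false} ≤ ENNReal.ofReal (K / N))
    (z : 𝒳 × 𝒳 × Bool) (L : ℕ) (δ : ℝ) (hδ : 0 < δ) (hL : (1 + K) / δ ≤ L) :
    (Measure.pi fun n : Fin N => if (n : ℕ) = 0 then Measure.dirac z else ν)
      {s | L < (Finset.univ.filter fun n : Fin N => (s n).2.2 = false).card} ≤
      ENNReal.ofReal δ := by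
  obtain ⟨M, rfl⟩ : ∃ M, N = M + 1 := ⟨N - 1, by omega⟩
  set μ : Fin (M + 1) → Measure (𝒳 × 𝒳 × Bool) :=
    fun n => if (n : ℕ) = 0 then Measure.dirac z else ν with hμ
  have : ∀ n, IsProbabilityMeasure (μ n) := by
    intro n; simp only [hμ]; split_ifs <;> infer_instance
  have hS : MeasurableSet {q : 𝒳 × 𝒳 × Bool | q.2.2 = false} :=
    measurableSet_eq_fun (by fun_prop) measurable_const
  set Y : 𝒳 × 𝒳 × Bool → ℝ≥0∞ := Set.indicator {q | q.2.2 = false} 1 with hY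
  have hYm : Measurable Y := measurable_one.indicator hS
  have hsum : ∫⁻ s, ∑ n, Y (s n) ∂(Measure.pi μ) ≤ ENNReal.ofReal (1 + K) := by
    rw [lintegral_finsetSum _ (fun n _ => by fun_prop)]
    have h1 : ∀ n, ∫⁻ s, Y (s n) ∂(Measure.pi μ) = μ n {q | q.2.2 = false} := by
      intro n
      rw [(measurePreserving_eval μ n).lintegral_comp hYm, hY, lintegral_indicator_one hS]
    simp only [h1]
    rw [Fin.sum_univ_succ, ENNReal.ofReal_add zero_le_one hK, ENNReal.ofReal_one]
    refine add_le_add prob_le_one ?_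
    calc ∑ i : Fin M, μ i.succ {q | q.2.2 = false}
        ≤ ∑ i : Fin M, ENNReal.ofReal (K / (M + 1 : ℕ)) := by
          refine Finset.sum_le_sum fun i _ => ?_
          simpa [hμ] using hν
      _ = ENNReal.ofReal (M * (K / (M + 1 : ℕ))) := by
          rw [Finset.sum_const, ENNReal.ofReal_mul (by positivity)]; simp
      _ ≤ ENNReal.ofReal K := by
          apply ENNReal.ofReal_le_ofReal
          rw [← mul_div_assoc, div_le_iff₀ (by positivity)]
          push_cast; nlinarith
  have hsub : {s : Fin (M + 1) → 𝒳 × 𝒳 × Bool |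
      L < (Finset.univ.filter fun n => (s n).2.2 = false).card} ⊆
      {s | (L : ℝ≥0∞) ≤ ∑ n, Y (s n)} := by
    intro s hs
    simp only [Set.mem_ofPred_eq] at hs ⊢
    have : ∑ n, Y (s n) = ((Finset.univ.filter fun n => (s n).2.2 = false).card : ℝ≥0∞) := by
      rw [Finset.card_filter]; push_cast
      refine Finset.sum_congr rfl fun n _ => ?_
      simp [hY, Set.indicator_apply]
    rw [this]; exact_mod_cast hs.le
  have hmk := mul_meas_ge_le_lintegral (μ := Measure.pi μ)
    (f := fun s : Fin (M + 1) → 𝒳 × 𝒳 × Bool => ∑ n, Y (s n))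
    (Finset.measurable_sum _ fun n _ => hYm.comp (measurable_pi_apply n)) (L : ℝ≥0∞)
  refine (measure_mono hsub).trans ?_
  have hLpos : (0 : ℝ) < L := lt_of_lt_of_le (by positivity) hL
  rw [← ENNReal.ofReal_toReal (measure_ne_top (Measure.pi μ) _)] at hmk ⊢
  apply ENNReal.ofReal_le_ofReal
  have h2 := hmk.trans hsum
  generalize hr : ((Measure.pi μ) {s | (L : ℝ≥0∞) ≤ ∑ n, Y (s n)}).toReal = r at h2 ⊢
  rw [← ENNReal.ofReal_natCast, ← ENNReal.ofReal_mul hLpos.le,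
    ENNReal.ofReal_le_ofReal_iff (by positivity)] at h2
  rw [div_le_iff₀ hδ] at hL
  by_contra hcon
  push Not at hcon
  nlinarith

lemma pi_step (δ : ℝ) (hδ : 0 < δ) (K : ℝ) (hK : 0 ≤ K) (g : ℝ) (hg : 0 < g) :
    ∃ (N0 L : ℕ) (c : ℝ), 1 ≤ N0 ∧ 1 ≤ L ∧ 0 < c ∧ ∀ N, N0 ≤ N →
      ∀ (mu : Measure 𝒳) (_ : IsProbabilityMeasure mu)
      (G : 𝒳 → ℝ) (_ : Measurable G) (_ : ∀ x, 0 < G x)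
      (_ : ∀ x, G x ≤ g) (_ : g⁻¹ ≤ ∫ x, G x ∂mu)
      (ν : Measure (𝒳 × 𝒳 × Bool)) (_ : IsProbabilityMeasure ν) (p : ℝ) (_ : 1 - p ≤ K / N)
      (_ : ENNReal.ofReal p • mu.map (fun y => (y, y, true)) ≤ ν) (a b : 𝒳),
      ENNReal.ofReal (1 - δ) ≤
        (Measure.pi fun n : Fin N => if (n : ℕ) = 0 then Measure.dirac (a, b, false) else ν)
          {s | Good N G L c s} := by
  set β : ℝ := 1 / (4 * g ^ 2) with hβ
  have hβpos : 0 < β := by positivity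
  obtain ⟨L, hL⟩ := exists_nat_ge ((1 + K) / (δ / 2))
  obtain ⟨N1, hN1⟩ := exists_nat_ge (2 * K)
  obtain ⟨N2, hN2⟩ := exists_nat_ge (2 - 2 * Real.log (δ / 2) / β)
  have hLpos : (0 : ℝ) < L := lt_of_lt_of_le (by positivity) hL
  refine ⟨max 1 (max N1 N2), L, g * (β / 2), le_max_left _ _, by exact_mod_cast hLpos,
    by positivity, ?_⟩
  intro N hN mu _ G hG hpos hle hGint ν _ p hp hν a b
  have hN0 : 1 ≤ N := (le_max_left _ _).trans hN
  have hN1' : (N1 : ℝ) ≤ N := by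
    exact_mod_cast ((le_max_left _ _).trans (le_max_right _ _)).trans hN
  have hN2' : (N2 : ℝ) ≤ N := by
    exact_mod_cast ((le_max_right _ _).trans (le_max_right _ _)).trans hN
  have hNpos : (0 : ℝ) < N := by exact_mod_cast hN0
  have hp2 : 1 / 2 ≤ p := by
    have : K / N ≤ 1 / 2 := by rw [div_le_iff₀ hNpos]; linarith
    linarith
  have hexp := integral_exp_bound mu G hG hpos g hg hle hGint ν p hp2 hν
  have hdiag : Measurable (fun y : 𝒳 => ((y, y, true) : 𝒳 × 𝒳 × Bool)) := by fun_prop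
  have hfalse : ν {q | q.2.2 = false} ≤ ENNReal.ofReal (K / N) := by
    have hS : MeasurableSet {q : 𝒳 × 𝒳 × Bool | q.2.2 = false} :=
      measurableSet_eq_fun (by fun_prop) measurable_const
    have h1 := hν {q | q.2.2 = false}ᶜ
    rw [Measure.smul_apply, Measure.map_apply hdiag hS.compl] at h1
    have h2 : (fun y : 𝒳 => ((y, y, true) : 𝒳 × 𝒳 × Bool)) ⁻¹' {q | q.2.2 = false}ᶜ
        = Set.univ := by ext; simp
    rw [h2, measure_univ, smul_eq_mul, mul_one, prob_compl_eq_one_sub hS] at h1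
    have h3 : ν {q | q.2.2 = false} ≤ 1 := prob_le_one
    have h4 : ν {q | q.2.2 = false} ≤ 1 - ENNReal.ofReal p := by
      apply ENNReal.le_sub_of_add_le_left ENNReal.ofReal_ne_top
      calc ENNReal.ofReal p + ν {q | q.2.2 = false}
          ≤ (1 - ν {q | q.2.2 = false}) + ν {q | q.2.2 = false} := by gcongr
        _ = 1 := tsub_add_cancel_of_le h3
    refine h4.trans ?_
    rw [← ENNReal.ofReal_one, ← ENNReal.ofReal_sub _ (by linarith)]
    exact ENNReal.ofReal_le_ofReal hp
  have hb1 := bad1_bound N hN0 ν K hK hfalse (a, b, false) L (δ / 2) (by positivity) hL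
  have hb2 : (Measure.pi fun n : Fin N => if (n : ℕ) = 0 then Measure.dirac (a, b, false) else ν)
      {s | (∑ j, if (s j).2.2 then G (s j).1 else 0) < g * (β / 2) * N} ≤
      ENNReal.ofReal (δ / 2) := by
    obtain ⟨M, rfl⟩ : ∃ M, N = M + 1 := ⟨N - 1, by omega⟩
    have := bad2_bound M G hG hpos g hg ν β hexp (a, b, false) (β / 2 * (M + 1 : ℕ))
    rw [← mul_assoc] at this
    refine this.trans (ENNReal.ofReal_le_ofReal ?_)
    rw [← Real.le_log_iff_exp_le (by positivity)]
    have h5 := hN2.trans hN2'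
    rw [sub_le_iff_le_add, ← sub_le_iff_le_add', le_div_iff₀ hβpos] at h5
    push_cast at h5 ⊢
    linarith
  set μ : Fin N → Measure (𝒳 × 𝒳 × Bool) :=
    fun n => if (n : ℕ) = 0 then Measure.dirac (a, b, false) else ν with hμ
  have : ∀ n, IsProbabilityMeasure (μ n) := by
    intro n; simp only [hμ]; split_ifs <;> infer_instance
  have hb0 : Measure.pi μ {s | (s ⟨0, hN0⟩).2.2 = true} = 0 := by
    have hS : MeasurableSet {q : 𝒳 × 𝒳 × Bool | q.2.2 = true} :=
      measurableSet_eq_fun (by fun_prop) measurable_const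
    have := (measurePreserving_eval μ ⟨0, hN0⟩).measure_preimage hS.nullMeasurableSet
    have h7 : {s : Fin N → 𝒳 × 𝒳 × Bool | (s ⟨0, hN0⟩).2.2 = true} =
      Function.eval (⟨0, hN0⟩ : Fin N) ⁻¹' {q | q.2.2 = true} := rfl
    rw [h7, this]
    simp [hμ, Measure.dirac_apply' _ hS]
  have hsub : {s | Good N G L (g * (β / 2)) s}ᶜ ⊆
      {s | (s ⟨0, hN0⟩).2.2 = true} ∪
      ({s | L < (Finset.univ.filter fun n : Fin N => (s n).2.2 = false).card} ∪
      {s | (∑ j, if (s j).2.2 then G (s j).1 else 0) < g * (β / 2) * N}) := by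
    intro s hs
    by_contra hcon
    simp only [Set.mem_union, Set.mem_ofPred_eq, not_or, not_lt] at hcon
    apply hs
    refine ⟨fun n hn => ?_, hcon.2.1, hcon.2.2⟩
    have : n = ⟨0, hN0⟩ := Fin.ext hn
    rw [this]; simpa using hcon.1
  have hgood := measurableSet_good N G hG L (g * (β / 2))
  have hc : Measure.pi μ {s | Good N G L (g * (β / 2)) s}ᶜ ≤ ENNReal.ofReal δ := by
    calc _ ≤ 0 + (ENNReal.ofReal (δ / 2) + ENNReal.ofReal (δ / 2)) := by
          refine (measure_mono hsub).trans ((measure_union_le _ _).trans ?_)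
          refine add_le_add hb0.le ((measure_union_le _ _).trans (add_le_add hb1 hb2))
      _ = ENNReal.ofReal δ := by
          rw [zero_add, ← ENNReal.ofReal_add (by positivity) (by positivity)]; congr 1; ring
  rw [prob_compl_eq_one_sub hgood] at hc
  rw [ENNReal.ofReal_sub _ hδ.le, ENNReal.ofReal_one]
  exact tsub_le_iff_tsub_le.1 hc

/-- A finite mixture of kernel values. -/
noncomputable def mix {N : ℕ} (m : Kernel 𝒳 𝒳) (w : Fin N → ℝ) (y : Fin N → 𝒳) : Measure 𝒳 :=
  ∑ j, ENNReal.ofReal (w j) • m (y j)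

lemma mix_apply {N : ℕ} (m : Kernel 𝒳 𝒳) (w : Fin N → ℝ) (y : Fin N → 𝒳) (A : Set 𝒳) :
    mix m w y A = ∑ j, ENNReal.ofReal (w j) * m (y j) A := by
  simp [mix, Measure.finsetSum_apply]

lemma mix_univ {N : ℕ} (m : Kernel 𝒳 𝒳) [IsMarkovKernel m] (w : Fin N → ℝ)
    (y : Fin N → 𝒳) (hw : ∀ j, 0 ≤ w j) : mix m w y Set.univ = ENNReal.ofReal (∑ j, w j) := by
  rw [mix_apply, ENNReal.ofReal_sum_of_nonneg fun j _ => hw j]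
  simp

instance mix_finite {N : ℕ} (m : Kernel 𝒳 𝒳) [IsMarkovKernel m] (w : Fin N → ℝ)
    (y : Fin N → 𝒳) : IsFiniteMeasure (mix m w y) := by
  refine ⟨?_⟩
  rw [mix_apply]
  simp

lemma measurable_mix {α : Type*} [MeasurableSpace α] {N : ℕ} (m : Kernel 𝒳 𝒳)
    (w : α → Fin N → ℝ) (y : α → Fin N → 𝒳) (hw : ∀ j, Measurable fun a => w a j)
    (hy : ∀ j, Measurable fun a => y a j) : Measurable fun a => mix m (w a) (y a) := by
  refine Measure.measurable_of_measurable_coe _ fun A hA => ?_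
  simp only [mix_apply]
  refine Finset.measurable_sum _ fun j _ => Measurable.mul (hw j).ennreal_ofReal ?_
  exact (m.measurable_coe hA).comp (hy j)

/-- Weighted sum of the coupled particles. -/
noncomputable def fA {N : ℕ} (G : 𝒳 → ℝ) (s : Fin N → 𝒳 × 𝒳 × Bool) : ℝ :=
  ∑ j, if (s j).2.2 then G (s j).1 else 0
/-- Weighted sum of the uncoupled particles, first system. -/
noncomputable def fB {N : ℕ} (G : 𝒳 → ℝ) (s : Fin N → 𝒳 × 𝒳 × Bool) : ℝ :=
  ∑ j, if (s j).2.2 then 0 else G (s j).1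
/-- Weighted sum of the uncoupled particles, second system. -/
noncomputable def fC {N : ℕ} (G : 𝒳 → ℝ) (s : Fin N → 𝒳 × 𝒳 × Bool) : ℝ :=
  ∑ j, if (s j).2.2 then 0 else G (s j).2.1
/-- First coupling probability. -/
noncomputable def fl {N : ℕ} (G : 𝒳 → ℝ) (s : Fin N → 𝒳 × 𝒳 × Bool) : ℝ :=
  fA G s / (fA G s + fB G s)
/-- Second coupling probability. -/
noncomputable def flc {N : ℕ} (G : 𝒳 → ℝ) (s : Fin N → 𝒳 × 𝒳 × Bool) : ℝ :=
  fA G s / (fA G s + fC G s)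
/-- Coupled mixture. -/
noncomputable def muA {N : ℕ} (m : Kernel 𝒳 𝒳) (G : 𝒳 → ℝ) (s : Fin N → 𝒳 × 𝒳 × Bool) :
    Measure 𝒳 :=
  mix m (fun j => if (s j).2.2 then G (s j).1 / fA G s else 0) fun j => (s j).1
/-- Uncoupled mixture, first system. -/
noncomputable def muB {N : ℕ} (m : Kernel 𝒳 𝒳) (G : 𝒳 → ℝ) (s : Fin N → 𝒳 × 𝒳 × Bool) :
    Measure 𝒳 :=
  mix m (fun j => if (s j).2.2 then 0 else G (s j).1 / fB G s) fun j => (s j).1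
/-- Uncoupled mixture, second system. -/
noncomputable def muC' {N : ℕ} (m : Kernel 𝒳 𝒳) (G : 𝒳 → ℝ) (s : Fin N → 𝒳 × 𝒳 × Bool) :
    Measure 𝒳 :=
  mix m (fun j => if (s j).2.2 then 0 else G (s j).2.1 / fC G s) fun j => (s j).2.1
/-- Residual law. -/
noncomputable def resid (a b : ℝ) (μ ν : Measure 𝒳) : Measure 𝒳 :=
  ENNReal.ofReal (|a - b| / (1 - min a b)) • μ +
      ENNReal.ofReal ((1 - max a b) / (1 - min a b)) • ν
/-- Law of an uncoupled pair. -/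
noncomputable def kapM {N : ℕ} (m : Kernel 𝒳 𝒳) (G : 𝒳 → ℝ) (s : Fin N → 𝒳 × 𝒳 × Bool) :
    Measure (𝒳 × 𝒳) :=
  if fl G s ≤ flc G s then (muB m G s).prod (resid (fl G s) (flc G s) (muA m G s) (muC' m G s))
  else (resid (fl G s) (flc G s) (muA m G s) (muB m G s)).prod (muC' m G s)
/-- Law of a pair. -/
noncomputable def pairM {N : ℕ} (m : Kernel 𝒳 𝒳) (G : 𝒳 → ℝ) (s : Fin N → 𝒳 × 𝒳 × Bool) :
    Measure (𝒳 × 𝒳 × Bool) :=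
  ENNReal.ofReal (min (fl G s) (flc G s)) • (muA m G s).map (fun y => (y, y, true)) +
    (1 - ENNReal.ofReal (min (fl G s) (flc G s))) •
      (kapM m G s).map (fun q => (q.1, q.2, false))

lemma coupleStep_eq (N : ℕ) (m : Kernel 𝒳 𝒳) (G : 𝒳 → ℝ) (xf xcf : 𝒳)
    (s : Fin N → 𝒳 × 𝒳 × Bool) :
    coupleStep N m G xf xcf s = Measure.pi fun n : Fin N =>
      if (n : ℕ) = 0 then Measure.dirac (xf, xcf, false) else pairM m G s := by
  simp only [pairM, kapM, muA, muB, muC', mix, apply_ite ENNReal.ofReal, ENNReal.ofReal_zero]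
  rfl

instance resid_finite (a b : ℝ) (μ ν : Measure 𝒳) [IsFiniteMeasure μ] [IsFiniteMeasure ν] :
    IsFiniteMeasure (resid a b μ ν) := by
  refine ⟨?_⟩
  simp only [resid, Measure.add_apply, Measure.smul_apply, smul_eq_mul]
  exact ENNReal.add_lt_top.2 ⟨ENNReal.mul_lt_top ENNReal.ofReal_lt_top (measure_lt_top _ _),
    ENNReal.mul_lt_top ENNReal.ofReal_lt_top (measure_lt_top _ _)⟩

set_option linter.unusedSectionVars false

section facts
variable {N : ℕ} (m : Kernel 𝒳 𝒳) [IsMarkovKernel m] (G : 𝒳 → ℝ) (hpos : ∀ x, 0 < G x)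
  (s : Fin N → 𝒳 × 𝒳 × Bool)

lemma fA_nonneg (hpos : ∀ x, 0 < G x) : 0 ≤ fA G s := Finset.sum_nonneg fun j _ => by
  split_ifs; exacts [(hpos _).le, le_rfl]
lemma fB_nonneg (hpos : ∀ x, 0 < G x) : 0 ≤ fB G s := Finset.sum_nonneg fun j _ => by
  split_ifs; exacts [le_rfl, (hpos _).le]
lemma fC_nonneg (hpos : ∀ x, 0 < G x) : 0 ≤ fC G s := Finset.sum_nonneg fun j _ => by
  split_ifs; exacts [le_rfl, (hpos _).le]

lemma fA_pos (hpos : ∀ x, 0 < G x) (j : Fin N) (hj : (s j).2.2 = true) : 0 < fA G s :=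
  Finset.sum_pos' (fun j _ => by split_ifs; exacts [(hpos _).le, le_rfl])
    ⟨j, Finset.mem_univ _, by simp [hj, hpos]⟩
lemma fB_pos (hpos : ∀ x, 0 < G x) (j : Fin N) (hj : (s j).2.2 = false) : 0 < fB G s :=
  Finset.sum_pos' (fun j _ => by split_ifs; exacts [le_rfl, (hpos _).le])
    ⟨j, Finset.mem_univ _, by simp [hj, hpos]⟩
lemma fC_pos (hpos : ∀ x, 0 < G x) (j : Fin N) (hj : (s j).2.2 = false) : 0 < fC G s :=
  Finset.sum_pos' (fun j _ => by split_ifs; exacts [le_rfl, (hpos _).le])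
    ⟨j, Finset.mem_univ _, by simp [hj, hpos]⟩

lemma muA_univ (hpos : ∀ x, 0 < G x) (h : 0 < fA G s) : muA m G s Set.univ = 1 := by
  rw [muA, mix_univ]
  · have : ∑ j, (if (s j).2.2 then G (s j).1 / fA G s else 0) = fA G s / fA G s := by
      conv_rhs => enter [1]; rw [fA]
      rw [Finset.sum_div]
      exact Finset.sum_congr rfl fun j _ => by split_ifs <;> simp
    rw [this, div_self h.ne', ENNReal.ofReal_one]
  · intro j; split_ifs; exacts [(div_pos (hpos _) h).le, le_rfl]
lemma muB_univ (hpos : ∀ x, 0 < G x) (h : 0 < fB G s) : muB m G s Set.univ = 1 := by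
  rw [muB, mix_univ]
  · have : ∑ j, (if (s j).2.2 then 0 else G (s j).1 / fB G s) = fB G s / fB G s := by
      conv_rhs => enter [1]; rw [fB]
      rw [Finset.sum_div]
      exact Finset.sum_congr rfl fun j _ => by split_ifs <;> simp
    rw [this, div_self h.ne', ENNReal.ofReal_one]
  · intro j; split_ifs; exacts [le_rfl, (div_pos (hpos _) h).le]
lemma muC_univ (hpos : ∀ x, 0 < G x) (h : 0 < fC G s) : muC' m G s Set.univ = 1 := by
  rw [muC', mix_univ]
  · have : ∑ j, (if (s j).2.2 then 0 else G (s j).2.1 / fC G s) = fC G s / fC G s := by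
      conv_rhs => enter [1]; rw [fC]
      rw [Finset.sum_div]
      exact Finset.sum_congr rfl fun j _ => by split_ifs <;> simp
    rw [this, div_self h.ne', ENNReal.ofReal_one]
  · intro j; split_ifs; exacts [le_rfl, (div_pos (hpos _) h).le]

lemma fl_nonneg (hpos : ∀ x, 0 < G x) : 0 ≤ fl G s :=
  div_nonneg (fA_nonneg G s hpos) (add_nonneg (fA_nonneg G s hpos) (fB_nonneg G s hpos))
lemma flc_nonneg (hpos : ∀ x, 0 < G x) : 0 ≤ flc G s :=
  div_nonneg (fA_nonneg G s hpos) (add_nonneg (fA_nonneg G s hpos) (fC_nonneg G s hpos))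
lemma fl_le_one (hpos : ∀ x, 0 < G x) : fl G s ≤ 1 :=
  div_le_one_of_le₀ (le_add_of_nonneg_right (fB_nonneg G s hpos))
    (add_nonneg (fA_nonneg G s hpos) (fB_nonneg G s hpos))
lemma flc_le_one (hpos : ∀ x, 0 < G x) : flc G s ≤ 1 :=
  div_le_one_of_le₀ (le_add_of_nonneg_right (fC_nonneg G s hpos))
    (add_nonneg (fA_nonneg G s hpos) (fC_nonneg G s hpos))

lemma resid_univ (a b : ℝ) (μ ν : Measure 𝒳) (ha : a < 1) (hb : b < 1)
    (hμ : a = b ∨ μ Set.univ = 1) (hν : ν Set.univ = 1) :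
    resid a b μ ν Set.univ = 1 := by
  have hmin : 0 < 1 - min a b := by
    have := min_le_left a b; linarith
  have hmax : max a b < 1 := max_lt ha hb
  simp only [resid, Measure.add_apply, Measure.smul_apply, smul_eq_mul, hν, mul_one]
  rcases hμ with rfl | hμ
  · simp only [min_self] at hmin
    simp [div_self hmin.ne']
  · rw [hμ, mul_one, ← ENNReal.ofReal_add (by positivity)
      (div_nonneg (by linarith) hmin.le), ← add_div]
    have : |a - b| + (1 - max a b) = 1 - min a b := by
      rw [← max_sub_min_eq_abs']; ring
    rw [this, div_self hmin.ne', ENNReal.ofReal_one]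

lemma pairM_prob (hN : 0 < N) (hpos : ∀ x, 0 < G x) : IsProbabilityMeasure (pairM m G s) := by
  refine ⟨?_⟩
  have hd1 : Measurable (fun y : 𝒳 => ((y, y, true) : 𝒳 × 𝒳 × Bool)) := by fun_prop
  have hd2 : Measurable (fun q : 𝒳 × 𝒳 => ((q.1, q.2, false) : 𝒳 × 𝒳 × Bool)) := by fun_prop
  have hA0 := fA_nonneg G s hpos
  have hfA : IsFiniteMeasure (muA m G s) := by unfold muA; infer_instance
  have hfB : IsFiniteMeasure (muB m G s) := by unfold muB; infer_instance
  have hfC : IsFiniteMeasure (muC' m G s) := by unfold muC'; infer_instance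
  simp only [pairM, Measure.add_apply, Measure.smul_apply, smul_eq_mul,
    Measure.map_apply hd1 MeasurableSet.univ, Measure.map_apply hd2 MeasurableSet.univ,
    Set.preimage_univ]
  by_cases hF : ∃ j, (s j).2.2 = false
  · obtain ⟨j, hj⟩ := hF
    have hB := fB_pos G s hpos j hj
    have hC := fC_pos G s hpos j hj
    have hl1 : fl G s < 1 := by rw [fl, div_lt_one (by linarith)]; linarith
    have hl2 : flc G s < 1 := by rw [flc, div_lt_one (by linarith)]; linarith
    have hmu : (fA G s = 0 ∧ fl G s = 0 ∧ flc G s = 0) ∨ muA m G s Set.univ = 1 := by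
      rcases hA0.eq_or_lt with h | h
      · left; simp [fl, flc, ← h]
      · right; exact muA_univ m G s hpos h
    have hres := fun ν hν => resid_univ (fl G s) (flc G s) (muA m G s) ν hl1 hl2
      (hmu.imp (fun h => by rw [h.2.1, h.2.2]) id) hν
    have hkap : kapM m G s Set.univ = 1 := by
      rw [kapM]
      split_ifs
      · rw [← Set.univ_prod_univ, Measure.prod_prod, muB_univ m G s hpos hB,
          hres _ (muC_univ m G s hpos hC), mul_one]
      · rw [← Set.univ_prod_univ, Measure.prod_prod, muC_univ m G s hpos hC,
          hres _ (muB_univ m G s hpos hB), mul_one]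
    rw [hkap, mul_one]
    rcases hmu with h | h
    · simp [h.2.1, h.2.2]
    · rw [h, mul_one]
      apply add_tsub_cancel_of_le
      rw [← ENNReal.ofReal_one]
      exact ENNReal.ofReal_le_ofReal ((min_le_left _ _).trans hl1.le)
  · push Not at hF
    have hT : ∀ j, (s j).2.2 = true := fun j => by simpa using hF j
    have hA := fA_pos G s hpos ⟨0, hN⟩ (hT _)
    have hB : fB G s = 0 := by simp [fB, hT]
    have hC : fC G s = 0 := by simp [fC, hT]
    have h1 : fl G s = 1 := by rw [fl, hB, add_zero, div_self hA.ne']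
    have h2 : flc G s = 1 := by rw [flc, hC, add_zero, div_self hA.ne']
    simp [h1, h2, muA_univ m G s hpos hA]

end facts

lemma measurable_flag_ite {α β : Type*} [MeasurableSpace α] [MeasurableSpace β]
    (b : α → Bool) (hb : Measurable b) (f h : α → β) (hf : Measurable f) (hh : Measurable h) :
    Measurable fun a => if b a then f a else h a :=
  Measurable.ite (measurableSet_eq_fun hb measurable_const) hf hh

lemma measurable_prod_measure {α β γ : Type*} [MeasurableSpace α] [MeasurableSpace β]
    [MeasurableSpace γ] (μ : α → Measure β) (ν : α → Measure γ) [∀ a, IsFiniteMeasure (μ a)]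
    [∀ a, IsFiniteMeasure (ν a)] (hμ : Measurable μ) (hν : Measurable ν) :
    Measurable fun a => (μ a).prod (ν a) := by
  have key : ∀ A B, MeasurableSet A → MeasurableSet B →
      Measurable fun a => (μ a).prod (ν a) (A ×ˢ B) := by
    intro A B hA hB
    simp only [Measure.prod_prod]
    exact ((Measure.measurable_coe hA).comp hμ).mul ((Measure.measurable_coe hB).comp hν)
  refine Measurable.measure_of_isPiSystem generateFrom_prod.symm isPiSystem_prod ?_ ?_
  · rintro _ ⟨A, hA, B, hB, rfl⟩
    exact key A B hA hB
  · rw [← Set.univ_prod_univ]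
    exact key _ _ MeasurableSet.univ MeasurableSet.univ

lemma measurable_smul_measure {α β : Type*} [MeasurableSpace α] [MeasurableSpace β]
    (c : α → ℝ≥0∞) (μ : α → Measure β) (hc : Measurable c) (hμ : Measurable μ) :
    Measurable fun a => c a • μ a := by
  refine Measure.measurable_of_measurable_coe _ fun A hA => ?_
  simp only [Measure.smul_apply, smul_eq_mul]
  exact hc.mul ((Measure.measurable_coe hA).comp hμ)

lemma measurable_add_measure {α β : Type*} [MeasurableSpace α] [MeasurableSpace β]
    (μ ν : α → Measure β) (hμ : Measurable μ) (hν : Measurable ν) :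
    Measurable fun a => μ a + ν a := by
  refine Measure.measurable_of_measurable_coe _ fun A hA => ?_
  simp only [Measure.add_apply]
  exact ((Measure.measurable_coe hA).comp hμ).add ((Measure.measurable_coe hA).comp hν)

lemma measurable_pairM (N : ℕ) (m : Kernel 𝒳 𝒳) [IsMarkovKernel m] (G : 𝒳 → ℝ)
    (hG : Measurable G) :
    Measurable fun s : Fin N → 𝒳 × 𝒳 × Bool => pairM m G s := by
  have hA : Measurable (fA (N := N) G) := measurable_flagSum G hG
  have hB : Measurable (fB (N := N) G) := Finset.measurable_sum _ fun j _ =>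
    measurable_flag_ite _ (by fun_prop) _ _ (by fun_prop) (by fun_prop)
  have hC : Measurable (fC (N := N) G) := Finset.measurable_sum _ fun j _ =>
    measurable_flag_ite _ (by fun_prop) _ _ (by fun_prop) (by fun_prop)
  have hl : Measurable (fl (N := N) G) := hA.div (hA.add hB)
  have hlc : Measurable (flc (N := N) G) := hA.div (hA.add hC)
  have hmA : Measurable (muA (N := N) m G) := measurable_mix _ _ _
    (fun j => measurable_flag_ite _ (by fun_prop) _ _ (by fun_prop) (by fun_prop))
    (fun j => by fun_prop)
  have hmB : Measurable (muB (N := N) m G) := measurable_mix _ _ _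
    (fun j => measurable_flag_ite _ (by fun_prop) _ _ (by fun_prop) (by fun_prop))
    (fun j => by fun_prop)
  have hmC : Measurable (muC' (N := N) m G) := measurable_mix _ _ _
    (fun j => measurable_flag_ite _ (by fun_prop) _ _ (by fun_prop) (by fun_prop))
    (fun j => by fun_prop)
  have hfA : ∀ s : Fin N → 𝒳 × 𝒳 × Bool, IsFiniteMeasure (muA m G s) := fun s => by
    unfold muA; infer_instance
  have hfB : ∀ s : Fin N → 𝒳 × 𝒳 × Bool, IsFiniteMeasure (muB m G s) := fun s => by
    unfold muB; infer_instance
  have hfC : ∀ s : Fin N → 𝒳 × 𝒳 × Bool, IsFiniteMeasure (muC' m G s) := fun s => by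
    unfold muC'; infer_instance
  have hres : ∀ ν : (Fin N → 𝒳 × 𝒳 × Bool) → Measure 𝒳, Measurable ν →
      Measurable fun s => resid (fl G s) (flc G s) (muA m G s) (ν s) := by
    intro ν hν
    unfold resid
    refine measurable_add_measure _ _ (measurable_smul_measure _ _ ?_ hmA)
      (measurable_smul_measure _ _ ?_ hν)
    · refine Measurable.ennreal_ofReal (Measurable.div ?_ ?_)
      · exact (hl.sub hlc).abs
      · exact measurable_const.sub (hl.min hlc)
    · refine Measurable.ennreal_ofReal (Measurable.div ?_ ?_)
      · exact measurable_const.sub (hl.max hlc)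
      · exact measurable_const.sub (hl.min hlc)
  have hkap : Measurable (kapM (N := N) m G) := by
    unfold kapM
    refine Measurable.ite (measurableSet_le hl hlc) ?_ ?_
    · exact measurable_prod_measure _ _ hmB (hres _ hmC)
    · exact measurable_prod_measure _ _ (hres _ hmB) hmC
  have hp : Measurable fun s : Fin N → 𝒳 × 𝒳 × Bool =>
      ENNReal.ofReal (min (fl G s) (flc G s)) := (hl.min hlc).ennreal_ofReal
  unfold pairM
  refine measurable_add_measure _ _ (measurable_smul_measure _ _ hp ?_)
    (measurable_smul_measure _ _ (measurable_const.sub hp) ?_)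
  · exact (Measure.measurable_map _ (by fun_prop)).comp hmA
  · exact (Measure.measurable_map _ (by fun_prop)).comp hkap

lemma coupleStep_prob (N : ℕ) (m : Kernel 𝒳 𝒳) [IsMarkovKernel m] (G : 𝒳 → ℝ)
    (hpos : ∀ x, 0 < G x) (xf xcf : 𝒳) (s : Fin N → 𝒳 × 𝒳 × Bool) :
    IsProbabilityMeasure (coupleStep N m G xf xcf s) := by
  rw [coupleStep_eq]
  have : ∀ n : Fin N, IsProbabilityMeasure
      (if (n : ℕ) = 0 then Measure.dirac (xf, xcf, false) else pairM m G s) := by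
    intro n
    have := pairM_prob m G s (Fin.pos n) hpos
    split_ifs <;> infer_instance
  infer_instance

lemma measurable_coupleStep (N : ℕ) (m : Kernel 𝒳 𝒳) [IsMarkovKernel m] (G : 𝒳 → ℝ)
    (hG : Measurable G) (hpos : ∀ x, 0 < G x) (xf xcf : 𝒳) :
    Measurable (coupleStep N m G xf xcf) := by
  have := coupleStep_prob N m G hpos xf xcf
  refine Measurable.measure_of_isPiSystem_of_isProbabilityMeasure generateFrom_pi.symm
    isPiSystem_pi ?_
  rintro _ ⟨A, hA, rfl⟩
  simp only [coupleStep_eq]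
  have hp : ∀ s : Fin N → 𝒳 × 𝒳 × Bool, ∀ n : Fin N, IsProbabilityMeasure
      (if (n : ℕ) = 0 then Measure.dirac (xf, xcf, false) else pairM m G s) := by
    intro s n
    have := pairM_prob m G s (Fin.pos n) hpos
    split_ifs <;> infer_instance
  simp only [Measure.pi_pi]
  refine Finset.measurable_prod _ fun n _ => ?_
  by_cases hn : (n : ℕ) = 0
  · simp only [hn, if_true]; exact measurable_const
  · simp only [hn, if_false]
    have hAn : MeasurableSet (A n) := hA n (Set.mem_univ n)
    exact (Measure.measurable_coe hAn).comp (measurable_pairM N m G hG)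

lemma measurable_snoc_map {α : Type*} [MeasurableSpace α] (t : ℕ)
    (κ : α → Measure α) [∀ a, IsProbabilityMeasure (κ a)] (hκ : Measurable κ) :
    Measurable fun s : Fin (t + 1) → α =>
      (κ (s (Fin.last t))).map fun y => (Fin.snoc s y : Fin (t + 1 + 1) → α) := by
  have hsn : Measurable fun q : (Fin (t + 1) → α) × α =>
      (Fin.snoc q.1 q.2 : Fin (t + 1 + 1) → α) := by
    refine measurable_pi_lambda _ fun i => ?_
    refine Fin.lastCases ?_ (fun i => ?_) i
    · simp only [Fin.snoc_last]; fun_prop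
    · simp only [Fin.snoc_castSucc]; fun_prop
  let η : Kernel (Fin (t + 1) → α) α :=
    ⟨fun s => κ (s (Fin.last t)), hκ.comp (measurable_pi_apply _)⟩
  have : IsMarkovKernel η := ⟨fun s => by
    change IsProbabilityMeasure (κ (s (Fin.last t))); infer_instance⟩
  refine Measure.measurable_of_measurable_coe _ fun A hA => ?_
  have h1 := Kernel.measurable_kernel_prodMk_left (κ := η) (hsn hA)
  convert h1 using 2 with s
  have h2 : Measurable fun y => (Fin.snoc s y : Fin (t + 1 + 1) → α) :=
    hsn.comp measurable_prodMk_left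
  rw [Measure.map_apply h2 hA]
  rfl

lemma integral_mix_ge {N : ℕ} (m : Kernel 𝒳 𝒳) [IsMarkovKernel m] (w : Fin N → ℝ)
    (y : Fin N → 𝒳) (hw : ∀ j, 0 ≤ w j) (hw1 : ∑ j, w j = 1) (G : 𝒳 → ℝ) (hG : Measurable G)
    (hpos : ∀ x, 0 < G x) (g : ℝ) (hle : ∀ x, G x ≤ g)
    (hGint : ∀ x', g⁻¹ ≤ ∫ x, G x ∂(m x')) : g⁻¹ ≤ ∫ x, G x ∂(mix m w y) := by
  have hi : ∀ x', Integrable G (m x') := fun x' =>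
    Integrable.of_bound hG.aestronglyMeasurable g (Eventually.of_forall fun q => by
      rw [Real.norm_eq_abs, abs_of_pos (hpos q)]; exact hle q)
  rw [mix, integral_finsetSum_measure fun j _ => (hi _).smul_measure ENNReal.ofReal_ne_top]
  simp only [integral_smul_measure, ENNReal.toReal_ofReal (hw _), smul_eq_mul]
  calc g⁻¹ = ∑ j, w j * g⁻¹ := by rw [← Finset.sum_mul, hw1, one_mul]
    _ ≤ _ := Finset.sum_le_sum fun j _ => mul_le_mul_of_nonneg_left (hGint _) (hw j)

lemma one_sub_div_le {a b c K : ℝ} (hc : 0 < c) (hca : c ≤ a) (hb : 0 ≤ b) (hbK : b ≤ K) :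
    1 - a / (a + b) ≤ K / c := by
  have : 1 - a / (a + b) = b / (a + b) := by
    have h0 : a + b ≠ 0 := by linarith
    field_simp; ring
  rw [this]
  exact div_le_div₀ (hb.trans hbK) hbK hc (by linarith)

lemma step_good (m : Kernel 𝒳 𝒳) [IsMarkovKernel m] (G G' : 𝒳 → ℝ) (hG' : Measurable G')
    (hpos : ∀ x, 0 < G x) (hpos' : ∀ x, 0 < G' x) (g g' : ℝ) (hg : 0 < g) (hg' : 0 < g')
    (hle : ∀ x, G x ≤ g) (hle' : ∀ x, G' x ≤ g') (hGint : ∀ x', g'⁻¹ ≤ ∫ x, G' x ∂(m x'))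
    (δ : ℝ) (hδ : 0 < δ) (L : ℕ) (c : ℝ) (hc : 0 < c) :
    ∃ (N0 L' : ℕ) (c' : ℝ), 1 ≤ N0 ∧ 1 ≤ L' ∧ 0 < c' ∧ ∀ N, N0 ≤ N → ∀ (xf xcf : 𝒳)
      (s : Fin N → 𝒳 × 𝒳 × Bool), Good N G L c s →
      ENNReal.ofReal (1 - δ) ≤ coupleStep N m G xf xcf s {s' | Good N G' L' c' s'} := by
  obtain ⟨N0, L', c', h1, h2, h3, h4⟩ :=
    pi_step (𝒳 := 𝒳) δ hδ (L * g / c) (by positivity) g' hg'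
  refine ⟨N0, L', c', h1, h2, h3, fun N hN xf xcf s hs => ?_⟩
  have hN1 : 1 ≤ N := h1.trans hN
  have hNpos : (0 : ℝ) < N := by exact_mod_cast hN1
  obtain ⟨hs0, hs1, hs2⟩ := hs
  have hA : c * N ≤ fA G s := hs2
  have hcN : 0 < c * N := by positivity
  have hApos : 0 < fA G s := by linarith
  have hcard : ∀ f : Fin N → 𝒳, ∑ j, (if (s j).2.2 then 0 else G (f j)) ≤ L * g := by
    intro f
    calc ∑ j, (if (s j).2.2 then 0 else G (f j))
        ≤ ∑ j, (if (s j).2.2 = false then g else 0) := by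
          refine Finset.sum_le_sum fun j _ => ?_
          by_cases h : (s j).2.2 = true
          · simp [h]
          · simp [h, hle]
      _ = ((Finset.univ.filter fun n : Fin N => (s n).2.2 = false).card : ℝ) * g := by
          rw [← Finset.sum_filter, Finset.sum_const, nsmul_eq_mul]
      _ ≤ L * g := by
          gcongr
  have hB : fB G s ≤ L * g := hcard fun j => (s j).1
  have hC : fC G s ≤ L * g := hcard fun j => (s j).2.1
  rw [coupleStep_eq]
  have hmu : IsProbabilityMeasure (muA m G s) := ⟨muA_univ m G s hpos hApos⟩
  refine h4 N hN (muA m G s) hmu G' hG' hpos' hle' ?_ _ (pairM_prob m G s hN1 hpos)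
    (min (fl G s) (flc G s)) ?_ ?_ xf xcf
  · refine integral_mix_ge m _ _ ?_ ?_ G' hG' hpos' g' hle' hGint
    · intro j; split_ifs; exacts [(div_pos (hpos _) hApos).le, le_rfl]
    · have : ∑ j, (if (s j).2.2 then G (s j).1 / fA G s else 0) = fA G s / fA G s := by
        conv_rhs => enter [1]; rw [fA]
        rw [Finset.sum_div]
        exact Finset.sum_congr rfl fun j _ => by split_ifs <;> simp
      rw [this, div_self hApos.ne']
  · rw [div_div]
    rcases min_choice (fl G s) (flc G s) with h | h
    · rw [h]; exact one_sub_div_le hcN hA (fB_nonneg G s hpos) hB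
    · rw [h]; exact one_sub_div_le hcN hA (fC_nonneg G s hpos) hC
  · exact Measure.le_add_right le_rfl

lemma main_induction
    (m0 : Measure 𝒳) (hm0 : IsProbabilityMeasure m0)
    (m : ℕ → Kernel 𝒳 𝒳) (hm : ∀ t, IsMarkovKernel (m t))
    (G : ℕ → 𝒳 → ℝ) (hGmeas : ∀ t, Measurable (G t))
    (hGpos : ∀ t x, 0 < G t x)
    (g : ℕ → ℝ) (hg : ∀ t, 0 < g t) (hGle : ∀ t x, G t x ≤ g t)
    (hg0 : (g 0)⁻¹ ≤ ∫ x, G 0 x ∂m0)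
    (hgt : ∀ t, 0 < t → ∀ x', (g t)⁻¹ ≤ ∫ x, G t x ∂((m t) x'))
    (δ : ℝ) (hδ : δ ∈ Set.Ioo (0 : ℝ) 1) (t : ℕ) :
    ∃ (N0 : ℕ) (L : ℕ → ℕ) (c : ℕ → ℝ), 1 ≤ N0 ∧ (∀ i, 1 ≤ L i) ∧ (∀ i, 0 < c i) ∧
      ∀ N, N0 ≤ N → ∀ x xc : ℕ → 𝒳, ENNReal.ofReal ((1 - δ) ^ (t + 1)) ≤
        coupledLaw N m0 m G x xc t
          {ω | ∀ r : Fin (t + 1), Good N (G r) (L r) (c r) (ω r)} := by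
  induction t with
  | zero =>
    obtain ⟨N0, L, c, h1, h2, h3, h4⟩ := pi_step (𝒳 := 𝒳) δ hδ.1 0 le_rfl (g 0) (hg 0)
    refine ⟨N0, fun _ => L, fun _ => c, h1, fun _ => h2, fun _ => h3, fun N hN x xc => ?_⟩
    have hd1 : Measurable (fun y : 𝒳 => ((y, y, true) : 𝒳 × 𝒳 × Bool)) := by fun_prop
    have hpr : IsProbabilityMeasure (m0.map fun y => ((y, y, true) : 𝒳 × 𝒳 × Bool)) :=
      Measure.isProbabilityMeasure_map hd1.aemeasurable
    have h5 := h4 N hN m0 hm0 (G 0) (hGmeas 0) (hGpos 0) (hGle 0) hg0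
      (m0.map fun y => (y, y, true)) hpr 1 (by simp) (by simp) (x 0) (xc 0)
    rw [coupledLaw]
    refine le_trans ?_ (Measure.le_map_apply ?_ _)
    · simpa using h5
    · exact (measurable_pi_lambda _ fun _ => measurable_id).aemeasurable
  | succ t ih =>
    obtain ⟨N0, L, c, h1, h2, h3, h4⟩ := ih
    have := hm (t + 1)
    obtain ⟨N1, L', c', k1, k2, k3, k4⟩ := step_good (m (t + 1)) (G t) (G (t + 1))
      (hGmeas (t + 1)) (hGpos t) (hGpos (t + 1)) (g t) (g (t + 1)) (hg t) (hg (t + 1)) (hGle t)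
      (hGle (t + 1)) (hgt (t + 1) (Nat.succ_pos t)) δ hδ.1 (L t) (c t) (h3 t)
    refine ⟨max N0 N1, Function.update L (t + 1) L', Function.update c (t + 1) c',
      h1.trans (le_max_left _ _), ?_, ?_, ?_⟩
    · intro i
      by_cases h : i = t + 1
      · subst h; simpa using k2
      · simpa [Function.update_of_ne h] using h2 i
    · intro i
      by_cases h : i = t + 1
      · subst h; simpa using k3
      · simpa [Function.update_of_ne h] using h3 i
    · intro N hN x xc
      have hA := h4 N ((le_max_left _ _).trans hN) x xc
      have hB := k4 N ((le_max_right _ _).trans hN) (x (t + 1)) (xc (t + 1))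
      set κ := coupleStep N (m (t + 1)) (G t) (x (t + 1)) (xc (t + 1)) with hκ
      have hκm : Measurable κ := measurable_coupleStep N _ _ (hGmeas t) (hGpos t) _ _
      have hκp : ∀ s, IsProbabilityMeasure (κ s) := coupleStep_prob N _ _ (hGpos t) _ _
      have hf := measurable_snoc_map t κ hκm
      set S : Set (Fin (t + 1) → Fin N → 𝒳 × 𝒳 × Bool) :=
        {ω | ∀ r : Fin (t + 1), Good N (G r) (L r) (c r) (ω r)} with hS
      have hSm : MeasurableSet S := by
        have : S = ⋂ r : Fin (t + 1), (fun ω => ω r) ⁻¹' {s | Good N (G r) (L r) (c r) s} := by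
          ext; simp [hS]
        rw [this]
        exact MeasurableSet.iInter fun r => (measurable_pi_apply r)
          (measurableSet_good N _ (hGmeas _) _ _)
      set S' : Set (Fin (t + 1 + 1) → Fin N → 𝒳 × 𝒳 × Bool) :=
        {ω | ∀ r : Fin (t + 1 + 1), Good N (G r) (Function.update L (t + 1) L' r)
          (Function.update c (t + 1) c' r) (ω r)} with hS'
      have hSm' : MeasurableSet S' := by
        have : S' = ⋂ r : Fin (t + 1 + 1), (fun ω => ω r) ⁻¹' {s | Good N (G r)
            (Function.update L (t + 1) L' r) (Function.update c (t + 1) c' r) s} := by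
          ext; simp [hS']
        rw [this]
        exact MeasurableSet.iInter fun r => (measurable_pi_apply r)
          (measurableSet_good N _ (hGmeas _) _ _)
      rw [coupledLaw, Measure.bind_apply hSm' hf.aemeasurable]
      have hpt : ∀ ω ∈ S, ENNReal.ofReal (1 - δ) ≤
          ((κ (ω (Fin.last t))).map fun y =>
            (Fin.snoc ω y : Fin (t + 1 + 1) → Fin N → 𝒳 × 𝒳 × Bool)) S' := by
        intro ω hω
        have hgood : Good N (G t) (L t) (c t) (ω (Fin.last t)) := by
          simpa using hω (Fin.last t)
        refine (hB _ hgood).trans ?_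
        have hsn : Measurable fun y =>
            (Fin.snoc ω y : Fin (t + 1 + 1) → Fin N → 𝒳 × 𝒳 × Bool) := by
          refine measurable_pi_lambda _ fun i => ?_
          refine Fin.lastCases ?_ (fun i => ?_) i
          · simp only [Fin.snoc_last]; fun_prop
          · simp only [Fin.snoc_castSucc]; fun_prop
        rw [Measure.map_apply hsn hSm']
        refine measure_mono fun y hy r => ?_
        refine Fin.lastCases ?_ (fun i => ?_) r
        · simpa using hy
        · have hi : ((i.castSucc : Fin (t + 1 + 1)) : ℕ) ≠ t + 1 := by
            have := i.2; simp only [Fin.val_castSucc]; omega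
          rw [Function.update_of_ne hi, Function.update_of_ne hi]
          simpa using hω i
      calc ENNReal.ofReal ((1 - δ) ^ (t + 1 + 1))
          = ENNReal.ofReal (1 - δ) * ENNReal.ofReal ((1 - δ) ^ (t + 1)) := by
            rw [← ENNReal.ofReal_mul (by linarith [hδ.2])]; congr 1; ring
        _ ≤ ENNReal.ofReal (1 - δ) * coupledLaw N m0 m G x xc t S := by gcongr
        _ = ∫⁻ _ω in S, ENNReal.ofReal (1 - δ) ∂(coupledLaw N m0 m G x xc t) := by
            rw [setLIntegral_const]
        _ ≤ ∫⁻ ω in S, ((κ (ω (Fin.last t))).map fun y =>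
            (Fin.snoc ω y : Fin (t + 1 + 1) → Fin N → 𝒳 × 𝒳 × Bool)) S'
              ∂(coupledLaw N m0 m G x xc t) := setLIntegral_mono' hSm hpt
        _ ≤ _ := setLIntegral_le_lintegral _ _

end Helpers

end ParticleGibbs

namespace ParticleGibbs

variable {𝒳 : Type*} [MetricSpace 𝒳] [CompleteSpace 𝒳] [TopologicalSpace.SeparableSpace 𝒳]
  [MeasurableSpace 𝒳] [BorelSpace 𝒳]

/-- Under Assumptions (G) and (MR), for any `δ ∈ (0,1)` and `T ≥ 1` there exist
`N₀, L_1, …, L_T` such that for all `N ≥ N₀` and all frozen trajectories, the coupled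
conditional particle systems satisfy
`∑_{k_1=1}^{L_1} ⋯ ∑_{k_T=1}^{L_T} ℙ(|C_1| = N-k_1, …, |C_T| = N-k_T) ≥ (1-δ)^{3T}`. -/
theorem coupling_set_cardinality_bound
    (T : ℕ) (hT : 1 ≤ T)
    (m0 : Measure 𝒳) (hm0 : IsProbabilityMeasure m0)
    (m : ℕ → Kernel 𝒳 𝒳) (hm : ∀ t, IsMarkovKernel (m t))
    (G : ℕ → 𝒳 → ℝ) (hGmeas : ∀ t, Measurable (G t))
    (hGpos : ∀ t x, 0 < G t x)
    (g : ℕ → ℝ) (hg : ∀ t, 0 < g t) (hGle : ∀ t x, G t x ≤ g t)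
    (hg0 : (g 0)⁻¹ ≤ ∫ x, G 0 x ∂m0)
    (hgt : ∀ t, 0 < t → ∀ x', (g t)⁻¹ ≤ ∫ x, G t x ∂((m t) x'))
    (δ : ℝ) (hδ : δ ∈ Set.Ioo (0 : ℝ) 1) :
    ∃ (N0 : ℕ) (L : Fin T → ℕ), 1 ≤ N0 ∧ (∀ i, 1 ≤ L i) ∧
      ∀ N, N0 ≤ N → ∀ (x xc : Fin (T + 1) → 𝒳),
        ENNReal.ofReal ((1 - δ) ^ (3 * T)) ≤
          ∑ k ∈ Fintype.piFinset (fun i : Fin T => Finset.Icc 1 (L i)),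
            coupledLaw N m0 m G (extendPath x) (extendPath xc) T
              {ω | ∀ i : Fin T, coupledCard ω i.succ = N - k i} := by
  obtain ⟨N0, L, c, h1, h2, _, h4⟩ := main_induction m0 hm0 m hm G hGmeas hGpos g hg hGle hg0 hgt
    δ hδ T
  refine ⟨N0, fun i => L (i + 1), h1, fun i => h2 _, fun N hN x xc => ?_⟩
  refine le_trans ?_ (measure_biUnion_finset_le _ _)
  refine (ENNReal.ofReal_le_ofReal ?_).trans
    ((h4 N hN (extendPath x) (extendPath xc)).trans (measure_mono ?_))
  · exact pow_le_pow_of_le_one (by linarith [hδ.2]) (by linarith [hδ.1]) (by omega)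
  · intro ω hω
    have hN1 : 1 ≤ N := h1.trans hN
    simp only [Set.mem_iUnion]
    have hcard : ∀ r, coupledCard ω r +
        (Finset.univ.filter fun n : Fin N => (ω r n).2.2 = false).card = N := by
      intro r
      have := Finset.card_filter_add_card_filter_not (s := (Finset.univ : Finset (Fin N)))
        (fun n => (ω r n).2.2 = true)
      simpa [coupledCard] using this
    refine ⟨fun i => (Finset.univ.filter fun n : Fin N => (ω i.succ n).2.2 = false).card, ?_, ?_⟩
    · rw [Fintype.mem_piFinset]
      intro i
      obtain ⟨a, b, _⟩ := hω i.succ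
      rw [Finset.mem_Icc]
      refine ⟨Finset.card_pos.2 ⟨⟨0, hN1⟩, ?_⟩, by simpa using b⟩
      simpa using a ⟨0, hN1⟩ rfl
    · intro i
      have := hcard i.succ
      simp only
      omega

end ParticleGibbs
end
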